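/- arXiv:2502.07816 — 3 statements merged into one kernel-verified Lean document; each statement's English description precedes it below -/
import Mathlib

section
/- Let N ≥ 2, 1 < p < N, 0 ≤ s < p, s < σ < N, 0 < σ + s ≤ 2p, and set p_{s,σ} := (2N−σ−s)p/(2(N−p)). There exists a constant C̄ = C̄(N,p,s,σ) > 0 such that for every u ∈ L^{p⋆}(ℝ^N) with p⋆ = Np/(N−p), the function V₃(x) := (∫_{ℝ^N} |u(y)|^{p_{s,σ}}/|x−y|^{σ} dy) · |u(x)|^{p_{s,σ}−p} belongs to L^{N/(p−s)}(ℝ^N) and satisfies ‖V₃‖_{L^{N/(p−s)}(ℝ^N)} ≤ C̄ · ‖u‖_{L^{p⋆}(ℝ^N)}^{2p_{s,σ}−p}. -/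
open MeasureTheory

/-- The critical exponent `p_{s,σ} = (2N - σ - s)p / (2(N - p))` of the weighted
nonlocal nonlinearity. -/
noncomputable def pcrit (N : ℕ) (p s σ : ℝ) : ℝ :=
  (2 * (N : ℝ) - σ - s) * p / (2 * ((N : ℝ) - p))

open Set

lemma radial_bound (N : ℕ) (hN : 1 ≤ N) (α : ℝ) (S : Set ℝ) (hS : MeasurableSet S)
    (hi : IntegrableOn (fun y : ℝ => y ^ ((N : ℝ) - 1 - α)) (Ioi 0 ∩ S)) :
    ∫⁻ x : EuclideanSpace ℝ (Fin N), ENNReal.ofReal (S.indicator (fun y => (y ^ α)⁻¹) ‖x‖) =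
      ENNReal.ofReal (N * (volume : Measure (EuclideanSpace ℝ (Fin N))).real (Metric.ball 0 1) *
        ∫ y in Ioi 0 ∩ S, y ^ ((N : ℝ) - 1 - α)) := by
  have : Nonempty (Fin N) := ⟨⟨0, hN⟩⟩
  have : Nontrivial (EuclideanSpace ℝ (Fin N)) := inferInstance
  have key : ∀ y ∈ Ioi (0:ℝ), y ^ (N - 1) • S.indicator (fun y => (y ^ α)⁻¹) y
      = S.indicator (fun y : ℝ => y ^ ((N : ℝ) - 1 - α)) y := by
    intro y hy
    have hy : 0 < y := hy
    by_cases h : y ∈ S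
    · simp only [indicator_of_mem h, smul_eq_mul]
      rw [Real.rpow_sub hy, ← Real.rpow_natCast, Nat.cast_sub hN]
      simp [div_eq_mul_inv]
    · simp [indicator_of_notMem h]
  have hi2 : IntegrableOn (S.indicator (fun y : ℝ => y ^ ((N : ℝ) - 1 - α))) (Ioi 0) := by
    unfold IntegrableOn
    rw [integrable_indicator_iff hS, IntegrableOn, Measure.restrict_restrict hS, inter_comm]
    exact hi
  have hint : Integrable (fun x : EuclideanSpace ℝ (Fin N) =>
      S.indicator (fun y => (y ^ α)⁻¹) ‖x‖) := by
    rw [integrable_fun_norm_addHaar volume (f := S.indicator (fun y : ℝ => (y ^ α)⁻¹))]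
    simp only [finrank_euclideanSpace, Fintype.card_fin]
    exact hi2.congr_fun (fun y hy => (key y hy).symm) measurableSet_Ioi
  rw [← ofReal_integral_eq_lintegral_ofReal hint, integral_fun_norm_addHaar volume
    (S.indicator (fun y : ℝ => (y ^ α)⁻¹))]
  · simp only [finrank_euclideanSpace, Fintype.card_fin]
    rw [setIntegral_congr_fun measurableSet_Ioi key, setIntegral_indicator hS]
    simp [mul_assoc]
  · refine Filter.Eventually.of_forall fun x => ?_
    exact indicator_apply_nonneg fun _ => by positivity

lemma near_bound (N : ℕ) (hN : 1 ≤ N) (σ : ℝ) (hσ : σ < N) :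
    ∃ C : ℝ, 0 < C ∧ ∀ R : ℝ, 0 < R →
      ∫⁻ x : EuclideanSpace ℝ (Fin N), ENNReal.ofReal ((Iio R).indicator (fun y => (y ^ σ)⁻¹) ‖x‖)
       ≤ ENNReal.ofReal (C * R ^ ((N : ℝ) - σ)) := by
  set V := (volume : Measure (EuclideanSpace ℝ (Fin N))).real (Metric.ball 0 1)
  refine ⟨(N * V + 1) / (N - σ), by have : 0 ≤ V := measureReal_nonneg; have : 0 < N - σ := by linarith
                                    positivity, fun R hR => ?_⟩
  have hV : 0 ≤ V := measureReal_nonneg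
  have hd : 0 < N - σ := by linarith
  have e : Ioi (0:ℝ) ∩ Iio R = Ioo 0 R := rfl
  have hii : IntegrableOn (fun y : ℝ => y ^ ((N : ℝ) - 1 - σ)) (Ioc 0 R) :=
    (intervalIntegrable_iff_integrableOn_Ioc_of_le hR.le).1
      (intervalIntegral.intervalIntegrable_rpow' (by linarith))
  rw [radial_bound N hN σ _ measurableSet_Iio (by rw [e]; exact hii.mono_set Ioo_subset_Ioc_self)]
  apply ENNReal.ofReal_le_ofReal
  rw [e, ← integral_Ioc_eq_integral_Ioo, ← intervalIntegral.integral_of_le hR.le,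
    integral_rpow (Or.inl (by linarith))]
  rw [show (N:ℝ) - 1 - σ + 1 = N - σ by ring, Real.zero_rpow hd.ne', sub_zero]
  rw [mul_div_assoc', div_mul_eq_mul_div]
  gcongr
  linarith

lemma far_bound (N : ℕ) (hN : 1 ≤ N) (τ : ℝ) (hτ : N < τ) :
    ∃ C : ℝ, 0 < C ∧ ∀ R : ℝ, 0 < R →
      ∫⁻ x : EuclideanSpace ℝ (Fin N), ENNReal.ofReal ((Ici R).indicator (fun y => (y ^ τ)⁻¹) ‖x‖)
       ≤ ENNReal.ofReal (C * R ^ ((N : ℝ) - τ)) := by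
  set V := (volume : Measure (EuclideanSpace ℝ (Fin N))).real (Metric.ball 0 1)
  refine ⟨(N * V + 1) / (τ - N), by have : 0 ≤ V := measureReal_nonneg; have : 0 < τ - N := by linarith
                                    positivity, fun R hR => ?_⟩
  have hV : 0 ≤ V := measureReal_nonneg
  have hd : 0 < τ - N := by linarith
  have e : Ioi (0:ℝ) ∩ Ici R = Ici R := by
    ext y; simp only [mem_inter_iff, mem_Ioi, mem_Ici, and_iff_right_iff_imp]; intro h; linarith
  have hii : IntegrableOn (fun y : ℝ => y ^ ((N : ℝ) - 1 - τ)) (Ici R) :=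
    (integrableOn_Ici_iff_integrableOn_Ioi).2 (integrableOn_Ioi_rpow_of_lt (by linarith) hR)
  rw [radial_bound N hN τ _ measurableSet_Ici (by rw [e]; exact hii)]
  apply ENNReal.ofReal_le_ofReal
  rw [e, integral_Ici_eq_integral_Ioi, integral_Ioi_rpow_of_lt (by linarith) hR]
  rw [show (N:ℝ) - 1 - τ + 1 = -(τ - N) by ring, show (N:ℝ) - τ = -(τ - N) by ring, neg_div_neg_eq]
  rw [mul_div_assoc', div_mul_eq_mul_div]
  gcongr
  linarith

lemma layer_fin (b : ℝ) (hb : 0 < b) (G : ℝ) (hG : 0 ≤ G) :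
    ∫⁻ l in Ioi (0:ℝ), (if ENNReal.ofReal l < ENNReal.ofReal G then ENNReal.ofReal (l ^ (b - 1)) else 0)
      = ENNReal.ofReal G ^ b / ENNReal.ofReal b := by
  have hii : IntegrableOn (fun y : ℝ => y ^ (b - 1)) (Ioc 0 G) :=
    (intervalIntegrable_iff_integrableOn_Ioc_of_le hG).1
      (intervalIntegral.intervalIntegrable_rpow' (by linarith))
  have e : ∀ l ∈ Ioi (0:ℝ), (if ENNReal.ofReal l < ENNReal.ofReal G then
      ENNReal.ofReal (l ^ (b - 1)) else 0) =
      (Iio G).indicator (fun l => ENNReal.ofReal (l ^ (b - 1))) l := by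
    intro l hl
    have hl : 0 < l := hl
    rw [indicator_apply]
    congr 1
    simp only [mem_Iio, eq_iff_iff]
    exact ENNReal.ofReal_lt_ofReal_iff_of_nonneg hl.le
  rw [setLIntegral_congr_fun measurableSet_Ioi e, lintegral_indicator measurableSet_Iio,
    Measure.restrict_restrict measurableSet_Iio, inter_comm, Ioi_inter_Iio,
    restrict_Ioo_eq_restrict_Ioc, ← ofReal_integral_eq_lintegral_ofReal hii,
    ← intervalIntegral.integral_of_le hG, integral_rpow (Or.inl (by linarith))]
  · rw [show b - 1 + 1 = b by ring, Real.zero_rpow hb.ne', sub_zero, ENNReal.ofReal_div_of_pos hb,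
      ENNReal.ofReal_rpow_of_nonneg hG hb.le]
  · refine (ae_restrict_iff' measurableSet_Ioc).2 (Filter.Eventually.of_forall fun y hy => ?_)
    exact Real.rpow_nonneg hy.1.le _

lemma layer (b : ℝ) (hb : 0 < b) (g : ENNReal) :
    ∫⁻ l in Ioi (0:ℝ), (if ENNReal.ofReal l < g then ENNReal.ofReal (l ^ (b - 1)) else 0)
      = g ^ b / ENNReal.ofReal b := by
  induction g with
  | coe x => 
    have := layer_fin b hb x x.2
    simpa using this
  | top =>
    rw [ENNReal.top_rpow_of_pos hb, ENNReal.top_div_of_ne_top ENNReal.ofReal_ne_top, eq_top_iff]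
    refine ENNReal.le_of_forall_nnreal_lt fun M _ => ?_
    have h2 : (M : ENNReal) = ENNReal.ofReal (((M:ℝ) * b) ^ (1/b)) ^ b / ENNReal.ofReal b := by
      rw [ENNReal.ofReal_rpow_of_nonneg (by positivity) hb.le, ← Real.rpow_mul (by positivity),
        one_div_mul_cancel hb.ne', Real.rpow_one, ← ENNReal.ofReal_div_of_pos hb,
        mul_div_cancel_right₀ _ hb.ne', ENNReal.ofReal_coe_nnreal]
    rw [h2, ← layer_fin b hb _ (by positivity)]
    gcongr with l
    split_ifs with h h'
    · exact le_rfl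
    · exact absurd ENNReal.ofReal_lt_top h'
    · simp
    · simp

lemma weak_bound (N : ℕ) (hN : 1 ≤ N) (σ r t : ℝ) (hσ0 : 0 < σ) (hσ : σ < N) (hr : 1 < r)
    (ht : 0 < t) (hrt : 1 / t = 1 / r - (N - σ) / N) :
    ∃ C₃ C : ℝ, 0 < C₃ ∧ 0 < C ∧ ∀ f : EuclideanSpace ℝ (Fin N) → ENNReal, Measurable f →
      ∫⁻ x, f x ^ r ≤ 1 → ∀ l : ℝ, 0 < l →
      volume {x | ENNReal.ofReal (C₃ * l) <
          ∫⁻ y, f y * ENNReal.ofReal ((‖x - y‖ ^ σ)⁻¹)} ≤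
        ENNReal.ofReal (C * l ^ (-(t / r))) *
          ∫⁻ y, (if ENNReal.ofReal (l ^ (t / r)) < f y then f y else 0) := by
  have hN0 : (0:ℝ) < N := by exact_mod_cast hN
  set q := Real.conjExponent r with hq
  have hc : r.HolderConjugate q := Real.HolderConjugate.conjExponent hr
  have hq0 : 0 < q := hc.symm.pos
  have hqi : 1 / q = 1 - 1 / r := by
    have := hc.inv_add_inv_eq_one
    simp only [one_div]; linarith
  have h1 : N / q - σ = -(N / t) := by
    have : (N:ℝ) / t = N * (1 / t) := by ring
    rw [this, hrt, div_eq_mul_one_div, hqi]; field_simp; ring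
  have hNt : 0 < N / t := by positivity
  have hτ : N < σ * q := by
    have : N / q < σ := by linarith
    rwa [div_lt_iff₀ hq0] at this
  obtain ⟨C₁, hC₁, hfar⟩ := far_bound N hN (σ * q) hτ
  obtain ⟨C₂, hC₂, hnear⟩ := near_bound N hN σ hσ
  refine ⟨C₁ ^ (1 / q) + C₂ + 1, C₂, by positivity, hC₂, ?_⟩
  intro f hf hf1 l hl
  set R := l ^ (-(t / N)) with hR
  have hR0 : 0 < R := Real.rpow_pos_of_pos hl _
  have hRt : R ^ (-(N / t)) = l := by
    rw [hR, ← Real.rpow_mul hl.le, show -(t / N) * -(N / t) = 1 by field_simp, Real.rpow_one]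
  have hRn : R ^ (N - σ) = l ^ (1 - t / r) := by
    rw [hR, ← Real.rpow_mul hl.le]
    congr 1
    have : t * (1 / t) = t * (1 / r - (N - σ) / N) := by rw [hrt]
    rw [mul_one_div_cancel ht.ne'] at this
    rw [this]; ring
  let Kn : EuclideanSpace ℝ (Fin N) → ENNReal := fun z =>
    ENNReal.ofReal ((Iio R).indicator (fun y => (y ^ σ)⁻¹) ‖z‖)
  let Kf : EuclideanSpace ℝ (Fin N) → ENNReal := fun z =>
    ENNReal.ofReal ((Ici R).indicator (fun y => (y ^ σ)⁻¹) ‖z‖)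
  let fh : EuclideanSpace ℝ (Fin N) → ENNReal := fun y =>
    if ENNReal.ofReal (l ^ (t / r)) < f y then f y else 0
  have hKn : Measurable Kn := by
    have : Measurable ((Iio R).indicator (fun y : ℝ => (y ^ σ)⁻¹)) :=
      (by fun_prop : Measurable (fun y : ℝ => (y ^ σ)⁻¹)).indicator measurableSet_Iio
    exact (this.comp measurable_norm).ennreal_ofReal
  have hKf : Measurable Kf := by
    have : Measurable ((Ici R).indicator (fun y : ℝ => (y ^ σ)⁻¹)) :=
      (by fun_prop : Measurable (fun y : ℝ => (y ^ σ)⁻¹)).indicator measurableSet_Ici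
    exact (this.comp measurable_norm).ennreal_ofReal
  have hfh : Measurable fh :=
    Measurable.ite (measurableSet_lt measurable_const hf) hf measurable_const
  have hsplit : ∀ z, ENNReal.ofReal ((‖z‖ ^ σ)⁻¹) = Kn z + Kf z := by
    intro z
    by_cases h : ‖z‖ < R
    · simp [Kn, Kf, indicator_apply, h, not_le.2 h]
    · simp [Kn, Kf, indicator_apply, h, not_lt.1 h]
  have hKnI : ∫⁻ z, Kn z ≤ ENNReal.ofReal (C₂ * l ^ (1 - t / r)) := by
    have := hnear R hR0
    rwa [hRn] at this
  have hKfI : ∫⁻ z, Kf z ^ q ≤ ENNReal.ofReal (C₁ * R ^ (N - σ * q)) := by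
    refine le_trans (le_of_eq ?_) (hfar R hR0)
    congr 1
    ext z
    by_cases h : R ≤ ‖z‖
    · simp only [Kf, indicator_apply, mem_Ici, h, if_true]
      rw [ENNReal.ofReal_rpow_of_nonneg (by positivity) hq0.le, Real.inv_rpow (by positivity),
        ← Real.rpow_mul (by positivity)]
    · simp [Kf, indicator_apply, h, hq0]
  have hfarx : ∀ x, ∫⁻ y, f y * Kf (x - y) ≤ ENNReal.ofReal (C₁ ^ (1 / q) * l) := by
    intro x
    have hm : Measurable (fun y => Kf (x - y)) := hKf.comp (measurable_const.sub measurable_id)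
    refine (ENNReal.lintegral_mul_le_Lp_mul_Lq volume hc hf.aemeasurable hm.aemeasurable).trans ?_
    have e1 : ∫⁻ y, Kf (x - y) ^ q = ∫⁻ z, Kf z ^ q :=
      lintegral_sub_left_eq_self (fun z => Kf z ^ q) x
    rw [e1]
    have e2 : (∫⁻ y, f y ^ r) ^ (1 / r) ≤ 1 :=
      ENNReal.rpow_le_one hf1 (by positivity)
    have e3 : (∫⁻ z, Kf z ^ q) ^ (1 / q) ≤ ENNReal.ofReal (C₁ ^ (1 / q) * l) := by
      refine (ENNReal.rpow_le_rpow hKfI (by positivity)).trans (le_of_eq ?_)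
      rw [ENNReal.ofReal_rpow_of_nonneg (by positivity) (by positivity),
        Real.mul_rpow hC₁.le (by positivity), ← Real.rpow_mul hR0.le]
      have : (N - σ * q) * (1 / q) = -(N / t) := by rw [← h1]; field_simp
      rw [this, hRt]
    calc _ ≤ 1 * ENNReal.ofReal (C₁ ^ (1 / q) * l) := mul_le_mul' e2 e3
      _ = _ := one_mul _
  have hlow : ∀ x, ∫⁻ y, ENNReal.ofReal (l ^ (t / r)) * Kn (x - y) ≤ ENNReal.ofReal (C₂ * l) := by
    intro x
    have hm : Measurable (fun y => Kn (x - y)) := hKn.comp (measurable_const.sub measurable_id)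
    rw [lintegral_const_mul _ hm, lintegral_sub_left_eq_self Kn x]
    refine (mul_le_mul_right hKnI _).trans (le_of_eq ?_)
    rw [← ENNReal.ofReal_mul (by positivity)]
    congr 1
    rw [mul_left_comm, ← Real.rpow_add hl]
    simp
  have hmain : ∀ x, ∫⁻ y, f y * ENNReal.ofReal ((‖x - y‖ ^ σ)⁻¹) ≤
      ENNReal.ofReal ((C₁ ^ (1 / q) + C₂) * l) + ∫⁻ y, fh y * Kn (x - y) := by
    intro x
    have hm : Measurable (fun y => Kn (x - y)) := hKn.comp (measurable_const.sub measurable_id)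
    have hm' : Measurable (fun y => Kf (x - y)) := hKf.comp (measurable_const.sub measurable_id)
    calc _ ≤ ∫⁻ y, (f y * Kf (x - y) + ENNReal.ofReal (l ^ (t / r)) * Kn (x - y)
              + fh y * Kn (x - y)) := by
          refine lintegral_mono fun y => ?_
          dsimp only
          rw [hsplit, mul_add, add_comm (f y * Kn _), add_assoc, ← add_mul]
          gcongr
          by_cases h : ENNReal.ofReal (l ^ (t / r)) < f y
          · simp [fh, h]
          · simp [fh, h, not_lt.1 h]
      _ = (∫⁻ y, f y * Kf (x - y)) + (∫⁻ y, ENNReal.ofReal (l ^ (t / r)) * Kn (x - y))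
              + ∫⁻ y, fh y * Kn (x - y) := by
          rw [lintegral_add_left (by fun_prop), lintegral_add_left (by fun_prop)]
      _ ≤ _ := by
          rw [add_mul, ENNReal.ofReal_add (by positivity) (by positivity)]
          gcongr
          · exact hfarx x
          · exact hlow x
  have hmm : Measurable (fun z : EuclideanSpace ℝ (Fin N) × EuclideanSpace ℝ (Fin N) =>
      fh z.2 * Kn (z.1 - z.2)) :=
    (hfh.comp measurable_snd).mul (hKn.comp (measurable_fst.sub measurable_snd))
  have hgm : Measurable (fun x => ∫⁻ y, fh y * Kn (x - y)) := hmm.lintegral_prod_right'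
  have hsub : {x | ENNReal.ofReal ((C₁ ^ (1 / q) + C₂ + 1) * l) <
          ∫⁻ y, f y * ENNReal.ofReal ((‖x - y‖ ^ σ)⁻¹)} ⊆
      {x | ENNReal.ofReal l ≤ ∫⁻ y, fh y * Kn (x - y)} := by
    intro x hx
    simp only [mem_ofPred_eq] at hx ⊢
    by_contra hcon
    push Not at hcon
    refine absurd (hx.trans_le (hmain x)) (not_lt.2 ?_)
    rw [add_mul _ 1, one_mul, ENNReal.ofReal_add (by positivity) hl.le]
    gcongr
  have hfub : ∫⁻ x, ∫⁻ y, fh y * Kn (x - y) = (∫⁻ y, fh y) * ∫⁻ z, Kn z := by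
    rw [lintegral_lintegral_swap hmm.aemeasurable, ← lintegral_mul_const _ hfh]
    congr 1
    ext y
    have hm : Measurable (fun x => Kn (x - y)) := hKn.comp (measurable_id.sub measurable_const)
    rw [lintegral_const_mul _ hm, lintegral_sub_right_eq_self Kn y]
  calc _ ≤ volume {x | ENNReal.ofReal l ≤ ∫⁻ y, fh y * Kn (x - y)} := measure_mono hsub
    _ ≤ (∫⁻ x, ∫⁻ y, fh y * Kn (x - y)) / ENNReal.ofReal l :=
        meas_ge_le_lintegral_div hgm.aemeasurable (by simpa using hl) ENNReal.ofReal_ne_top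
    _ ≤ ((∫⁻ y, fh y) * ENNReal.ofReal (C₂ * l ^ (1 - t / r))) / ENNReal.ofReal l := by
        rw [hfub]; gcongr
    _ = _ := by
        rw [mul_div_assoc, ← ENNReal.ofReal_div_of_pos hl, mul_comm]
        congr 2
        rw [mul_div_assoc, sub_eq_add_neg, Real.rpow_add hl, Real.rpow_one]
        field_simp

lemma hls_one (N : ℕ) (hN : 1 ≤ N) (σ r t : ℝ) (hσ0 : 0 < σ) (hσ : σ < N) (hr : 1 < r)
    (ht : 0 < t) (hrt : 1 / t = 1 / r - (N - σ) / N) :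
    ∃ C : ENNReal, C ≠ ⊤ ∧ ∀ f : EuclideanSpace ℝ (Fin N) → ENNReal, Measurable f →
      ∫⁻ x, f x ^ r ≤ 1 →
      ∫⁻ x, (∫⁻ y, f y * ENNReal.ofReal ((‖x - y‖ ^ σ)⁻¹)) ^ t ≤ C := by
  obtain ⟨C₃, C, hC₃, hC, hw⟩ := weak_bound N hN σ r t hσ0 hσ hr ht hrt
  have hr0 : 0 < r := by linarith
  set b := t - t / r with hb
  have hb0 : 0 < b := by
    rw [hb, sub_pos, div_lt_iff₀ hr0]; nlinarith
  refine ⟨ENNReal.ofReal C₃ ^ t * (ENNReal.ofReal t * (ENNReal.ofReal C * (1 / ENNReal.ofReal b))),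
    ?_, ?_⟩
  · refine ENNReal.mul_ne_top (ENNReal.rpow_ne_top_of_nonneg ht.le ENNReal.ofReal_ne_top) ?_
    refine ENNReal.mul_ne_top ENNReal.ofReal_ne_top (ENNReal.mul_ne_top ENNReal.ofReal_ne_top ?_)
    refine ENNReal.div_ne_top (by simp) (by simpa using hb0)
  intro f hf hf1
  set F : EuclideanSpace ℝ (Fin N) → ENNReal :=
    fun x => ∫⁻ y, f y * ENNReal.ofReal ((‖x - y‖ ^ σ)⁻¹) with hF
  have hFm : Measurable F := by
    have : Measurable (fun z : EuclideanSpace ℝ (Fin N) × EuclideanSpace ℝ (Fin N) =>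
        f z.2 * ENNReal.ofReal ((‖z.1 - z.2‖ ^ σ)⁻¹)) := by fun_prop
    exact this.lintegral_prod_right'
  set g : EuclideanSpace ℝ (Fin N) → ENNReal := fun x => F x / ENNReal.ofReal C₃ with hg
  have hgm : Measurable g := hFm.div_const _
  have hC3n : ENNReal.ofReal C₃ ≠ 0 := by simpa using hC₃
  have hFg : ∀ x, F x = ENNReal.ofReal C₃ * g x := fun x =>
    (ENNReal.mul_div_cancel hC3n ENNReal.ofReal_ne_top).symm
  have hlev : ∀ l : ℝ, 0 < l → volume {x | ENNReal.ofReal l < g x} ≤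
      ENNReal.ofReal (C * l ^ (-(t / r))) *
          ∫⁻ y, (if ENNReal.ofReal (l ^ (t / r)) < f y then f y else 0) := by
    intro l hl
    refine le_trans (measure_mono ?_) (hw f hf hf1 l hl)
    intro x hx
    simp only [mem_ofPred_eq] at hx ⊢
    change _ < F x
    rw [hFg, ENNReal.ofReal_mul hC₃.le]
    exact (ENNReal.mul_lt_mul_iff_right hC3n ENNReal.ofReal_ne_top).2 hx
  have hgt : ∫⁻ x, g x ^ t ≤ ENNReal.ofReal t * (ENNReal.ofReal C * (1 / ENNReal.ofReal b)) := by
    have htn : ENNReal.ofReal t ≠ 0 := by simpa using ht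
    have e1 : ∀ x, g x ^ t = ENNReal.ofReal t * ∫⁻ l in Ioi (0:ℝ),
        (if ENNReal.ofReal l < g x then ENNReal.ofReal (l ^ (t - 1)) else 0) := by
      intro x
      rw [layer t ht, ENNReal.mul_div_cancel htn ENNReal.ofReal_ne_top]
    have m1 : Measurable (fun z : EuclideanSpace ℝ (Fin N) × ℝ =>
        (if ENNReal.ofReal z.2 < g z.1 then ENNReal.ofReal (z.2 ^ (t - 1)) else 0)) :=
      Measurable.ite (measurableSet_lt (by fun_prop) (by fun_prop)) (by fun_prop) measurable_const
    have m2 : Measurable (fun z : ℝ × EuclideanSpace ℝ (Fin N) =>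
        (if ENNReal.ofReal (z.1 ^ (t / r)) < f z.2 then
          f z.2 * ENNReal.ofReal (z.1 ^ (b - 1)) else 0)) :=
      Measurable.ite (measurableSet_lt (by fun_prop) (by fun_prop)) (by fun_prop) measurable_const
    simp_rw [e1]
    rw [lintegral_const_mul _ m1.lintegral_prod_right']
    gcongr
    rw [lintegral_lintegral_swap m1.aemeasurable]
    calc _ ≤ ∫⁻ l in Ioi (0:ℝ), ENNReal.ofReal C *
          ∫⁻ y, (if ENNReal.ofReal (l ^ (t / r)) < f y then
            f y * ENNReal.ofReal (l ^ (b - 1)) else 0) := by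
          refine setLIntegral_mono' measurableSet_Ioi fun l hl => ?_
          have hl : 0 < l := hl
          have ms : MeasurableSet {x | ENNReal.ofReal l < g x} := measurableSet_lt measurable_const hgm
          have mf : Measurable (fun y => if ENNReal.ofReal (l ^ (t / r)) < f y then f y else 0) :=
            Measurable.ite (measurableSet_lt measurable_const hf) hf measurable_const
          have : ∫⁻ x, (if ENNReal.ofReal l < g x then ENNReal.ofReal (l ^ (t - 1)) else 0) =
              ENNReal.ofReal (l ^ (t - 1)) * volume {x | ENNReal.ofReal l < g x} := by
            rw [← lintegral_indicator_const ms]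
            congr 1
            ext x
            simp only [indicator_apply, mem_ofPred_eq]
          rw [this]
          refine (mul_le_mul_right (hlev l hl) _).trans (le_of_eq ?_)
          have h2 : ∀ y, (if ENNReal.ofReal (l ^ (t / r)) < f y then
            f y * ENNReal.ofReal (l ^ (b - 1)) else 0) =
            (if ENNReal.ofReal (l ^ (t / r)) < f y then f y else 0) *
              ENNReal.ofReal (l ^ (b - 1)) := by intro y; split_ifs <;> simp
          simp_rw [h2]
          rw [lintegral_mul_const _ mf, ← mul_assoc, ← ENNReal.ofReal_mul (by positivity),
            mul_comm (∫⁻ y, _), ← mul_assoc (ENNReal.ofReal C), ← ENNReal.ofReal_mul hC.le]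
          congr 2
          rw [mul_left_comm, ← Real.rpow_add hl]
          congr 2
          rw [hb]; ring
      _ = ENNReal.ofReal C * ∫⁻ y, ∫⁻ l in Ioi (0:ℝ),
          (if ENNReal.ofReal (l ^ (t / r)) < f y then
            f y * ENNReal.ofReal (l ^ (b - 1)) else 0) := by
          rw [lintegral_const_mul _ m2.lintegral_prod_right',
            lintegral_lintegral_swap m2.aemeasurable]
      _ = ENNReal.ofReal C * ∫⁻ y, f y ^ r / ENNReal.ofReal b := by
          congr 2
          ext y
          have h3 : ∀ l ∈ Ioi (0:ℝ), (if ENNReal.ofReal (l ^ (t / r)) < f y then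
            f y * ENNReal.ofReal (l ^ (b - 1)) else 0) = f y *
            (if ENNReal.ofReal l < f y ^ (r / t) then ENNReal.ofReal (l ^ (b - 1)) else 0) := by
            intro l hl
            have hl : 0 < l := hl
            have : (ENNReal.ofReal (l ^ (t / r)) < f y) ↔ ENNReal.ofReal l < f y ^ (r / t) := by
              rw [← ENNReal.ofReal_rpow_of_pos hl, show t / r = (r / t)⁻¹ by rw [inv_div],
                ENNReal.rpow_inv_lt_iff (by positivity)]
            simp only [this]
            split_ifs <;> simp
          have m3 : Measurable (fun l : ℝ =>
            if ENNReal.ofReal l < f y ^ (r / t) then ENNReal.ofReal (l ^ (b - 1)) else 0) :=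
            Measurable.ite (measurableSet_lt (by fun_prop) (by fun_prop)) (by fun_prop)
              measurable_const
          rw [setLIntegral_congr_fun measurableSet_Ioi h3, lintegral_const_mul _ m3, layer b hb0,
            ← ENNReal.rpow_mul, ← mul_div_assoc]
          congr 1
          have : r / t * b = r - 1 := by rw [hb]; field_simp
          rw [this]
          conv_lhs => rw [← ENNReal.rpow_one (f y), ← ENNReal.rpow_mul, one_mul]
          rw [← ENNReal.rpow_add_of_nonneg _ _ zero_le_one (by linarith)]
          congr 1; ring
      _ ≤ _ := by
          simp_rw [div_eq_mul_inv]
          rw [lintegral_mul_const _ (hf.pow_const r)]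
          gcongr
  calc _ = ∫⁻ x, F x ^ t := rfl
    _ = ENNReal.ofReal C₃ ^ t * ∫⁻ x, g x ^ t := by
      rw [← lintegral_const_mul _ (hgm.pow_const t)]
      congr 1; ext x
      rw [hFg, ENNReal.mul_rpow_of_nonneg _ _ ht.le]
    _ ≤ _ := by gcongr

lemma hls (N : ℕ) (hN : 1 ≤ N) (σ r t : ℝ) (hσ0 : 0 < σ) (hσ : σ < N) (hr : 1 < r)
    (ht : 0 < t) (hrt : 1 / t = 1 / r - (N - σ) / N) :
    ∃ C : ENNReal, C ≠ ⊤ ∧ ∀ f : EuclideanSpace ℝ (Fin N) → ENNReal, Measurable f →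
      ∫⁻ x, f x ^ r ≠ ⊤ →
      ∫⁻ x, (∫⁻ y, f y * ENNReal.ofReal ((‖x - y‖ ^ σ)⁻¹)) ^ t ≤
        C * (∫⁻ x, f x ^ r) ^ (t / r) := by
  obtain ⟨C, hC, h⟩ := hls_one N hN σ r t hσ0 hσ hr ht hrt
  have hr0 : 0 < r := by linarith
  refine ⟨C, hC, fun f hf hfin => ?_⟩
  set A := ∫⁻ x, f x ^ r with hA
  by_cases hA0 : A = 0
  · have h0 : f =ᵐ[volume] 0 := by
      rw [hA, lintegral_eq_zero_iff (hf.pow_const r)] at hA0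
      filter_upwards [hA0] with x hx
      simpa [hr0, not_lt.2 hr0.le] using hx
    have : ∀ x, ∫⁻ y, f y * ENNReal.ofReal ((‖x - y‖ ^ σ)⁻¹) = 0 := by
      intro x
      rw [lintegral_congr_ae (g := fun _ => 0) (by filter_upwards [h0] with y hy; simp [hy])]
      simp
    simp [this, ht]
  · set c := A ^ (1 / r) with hc
    have hc0 : c ≠ 0 := by simp [hc, hA0, hfin]
    have hct : c ≠ ⊤ := ENNReal.rpow_ne_top_of_nonneg (by positivity) hfin
    have hci : c⁻¹ ≠ ⊤ := ENNReal.inv_ne_top.2 hc0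
    have h1 := h (fun x => c⁻¹ * f x) (hf.const_mul _) (by
      simp_rw [ENNReal.mul_rpow_of_nonneg _ _ hr0.le]
      rw [lintegral_const_mul _ (hf.pow_const r), ENNReal.inv_rpow, hc, ← ENNReal.rpow_mul,
        one_div_mul_cancel hr0.ne', ENNReal.rpow_one]
      exact (ENNReal.inv_mul_cancel hA0 hfin).le)
    have hFm : Measurable (fun x => ∫⁻ y, f y * ENNReal.ofReal ((‖x - y‖ ^ σ)⁻¹)) := by
      have : Measurable (fun z : EuclideanSpace ℝ (Fin N) × EuclideanSpace ℝ (Fin N) =>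
          f z.2 * ENNReal.ofReal ((‖z.1 - z.2‖ ^ σ)⁻¹)) := by fun_prop
      exact this.lintegral_prod_right'
    simp_rw [mul_assoc] at h1
    have h2 : ∀ x, ∫⁻ y, c⁻¹ * (f y * ENNReal.ofReal ((‖x - y‖ ^ σ)⁻¹)) =
        c⁻¹ * ∫⁻ y, f y * ENNReal.ofReal ((‖x - y‖ ^ σ)⁻¹) := fun x =>
      lintegral_const_mul' _ _ hci
    simp_rw [h2, ENNReal.mul_rpow_of_nonneg _ _ ht.le] at h1
    rw [lintegral_const_mul _ (hFm.pow_const t), ENNReal.inv_rpow, mul_comm, ← div_eq_mul_inv] at h1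
    have h3 : c ^ t = A ^ (t / r) := by
      rw [hc, ← ENNReal.rpow_mul]; congr 1; ring
    rw [← h3]
    refine (ENNReal.div_le_iff (by simp [hc0, hct]) (ENNReal.rpow_ne_top_of_nonneg ht.le hct)).1 h1

theorem stmt_14 (N : ℕ) (hN : 2 ≤ N) (p s σ : ℝ) (hp1 : 1 < p) (hpN : p < (N : ℝ))
    (hs0 : 0 ≤ s) (hsp : s < p) (hsσ : s < σ) (hσN : σ < (N : ℝ))
    (hss0 : 0 < σ + s) (hss : σ + s ≤ 2 * p) :
    ∃ Cbar : ℝ, 0 < Cbar ∧ ∀ u : EuclideanSpace ℝ (Fin N) → ℝ, Measurable u →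
      (∫⁻ x, ENNReal.ofReal (|u x| ^ ((N : ℝ) * p / ((N : ℝ) - p)))) < ⊤ →
      (∫⁻ x, ((∫⁻ y, ENNReal.ofReal (|u y| ^ pcrit N p s σ / ‖x - y‖ ^ σ)) *
          ENNReal.ofReal (|u x| ^ (pcrit N p s σ - p))) ^ ((N : ℝ) / (p - s))) < ⊤ ∧
      (∫⁻ x, ((∫⁻ y, ENNReal.ofReal (|u y| ^ pcrit N p s σ / ‖x - y‖ ^ σ)) *
          ENNReal.ofReal (|u x| ^ (pcrit N p s σ - p))) ^ ((N : ℝ) / (p - s))) ^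
            ((p - s) / (N : ℝ)) ≤
        ENNReal.ofReal Cbar *
          ((∫⁻ x, ENNReal.ofReal (|u x| ^ ((N : ℝ) * p / ((N : ℝ) - p)))) ^
            (((N : ℝ) - p) / ((N : ℝ) * p))) ^ (2 * pcrit N p s σ - p) := by
  have hN0 : (0:ℝ) < N := by linarith
  have hd1 : 0 < (N:ℝ) - p := by linarith
  have hd2 : 0 < p - s := by linarith
  have hd3 : 0 < σ - s := by linarith
  have hd4 : 0 < 2 * (N:ℝ) - σ - s := by linarith
  have hp0 : 0 < p := by linarith
  have hσ0 : 0 < σ := by linarith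
  set q := pcrit N p s σ with hq
  have hqe : q = (2 * (N : ℝ) - σ - s) * p / (2 * ((N : ℝ) - p)) := rfl
  set P := (N : ℝ) * p / ((N : ℝ) - p) with hP
  set r := 2 * (N:ℝ) / (2 * N - σ - s) with hr
  set t := 2 * (N:ℝ) / (σ - s) with ht
  set m := (N : ℝ) / (p - s) with hm
  set a := (σ - s) / (2 * (p - s)) with ha
  set b := (2 * p - σ - s) / (2 * (p - s)) with hb
  have hq0 : 0 < q := by rw [hqe]; positivity
  have hqp : q - p = p * (2 * p - σ - s) / (2 * (N - p)) := by rw [hqe]; field_simp; ring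
  have hP0 : 0 < P := by positivity
  have ht0 : 0 < t := by positivity
  have hm0 : 0 < m := by positivity
  have hr1 : 1 < r := by rw [hr, lt_div_iff₀ hd4]; linarith
  have hr0 : 0 < r := by linarith
  have ha0 : 0 ≤ a := by positivity
  have hb0 : 0 ≤ b := div_nonneg (by linarith) (by positivity)
  have hab : a + b = 1 := by rw [ha, hb]; field_simp; ring
  have hqr : q * r = P := by rw [hqe, hr, hP]; field_simp
  have hta : t * a = m := by rw [ht, ha, hm]; field_simp
  have hPb : P * b = (q - p) * m := by rw [hqp, hP, hb, hm]; field_simp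
  have hqp0 : 0 ≤ q - p := by
    rw [hqp]; exact div_nonneg (mul_nonneg hp0.le (by linarith)) (by positivity)
  have hexp : (t / r * a + b) * ((p - s) / N) = (N - p) / (N * p) * (2 * q - p) := by
    rw [hqe, hr, ht, ha, hb]; field_simp; ring
  obtain ⟨C, hC, H⟩ := hls N (by omega) σ r t hσ0 hσN hr1 ht0
    (by rw [hr, ht]; field_simp; ring)
  set D := (C ^ a) ^ ((p - s) / N) with hD
  have hCa : C ^ a ≠ ⊤ := ENNReal.rpow_ne_top_of_nonneg ha0 hC
  have hDt : D ≠ ⊤ := ENNReal.rpow_ne_top_of_nonneg (by positivity) hCa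
  refine ⟨D.toReal + 1, by positivity, fun u hu hfin => ?_⟩
  set A := ∫⁻ x, ENNReal.ofReal (|u x| ^ P) with hA
  have hum : Measurable (fun y => |u y|) := continuous_abs.measurable.comp hu
  have hfm : Measurable (fun y => ENNReal.ofReal (|u y| ^ q)) := by fun_prop
  have hUm : Measurable (fun y => ENNReal.ofReal (|u y| ^ P)) := by fun_prop
  have hfr : ∫⁻ x, ENNReal.ofReal (|u x| ^ q) ^ r = A := by
    rw [hA]; congr 1; ext x
    rw [ENNReal.ofReal_rpow_of_nonneg (by positivity) hr0.le, ← Real.rpow_mul (abs_nonneg _), hqr]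
  have H1 := H _ hfm (by rw [hfr]; exact hfin.ne)
  rw [hfr] at H1
  have hin : ∀ x, ∫⁻ y, ENNReal.ofReal (|u y| ^ q / ‖x - y‖ ^ σ) =
      ∫⁻ y, ENNReal.ofReal (|u y| ^ q) * ENNReal.ofReal ((‖x - y‖ ^ σ)⁻¹) := by
    intro x; congr 1; ext y
    rw [div_eq_mul_inv, ENNReal.ofReal_mul (by positivity)]
  simp_rw [hin]
  set F : EuclideanSpace ℝ (Fin N) → ENNReal := fun x =>
    ∫⁻ y, ENNReal.ofReal (|u y| ^ q) * ENNReal.ofReal ((‖x - y‖ ^ σ)⁻¹) with hF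
  have hFm : Measurable F := by
    have : Measurable (fun z : EuclideanSpace ℝ (Fin N) × EuclideanSpace ℝ (Fin N) =>
        ENNReal.ofReal (|u z.2| ^ q) * ENNReal.ofReal ((‖z.1 - z.2‖ ^ σ)⁻¹)) := by fun_prop
    exact this.lintegral_prod_right'
  have hI : ∫⁻ x, (F x * ENNReal.ofReal (|u x| ^ (q - p))) ^ m ≤
      C ^ a * A ^ (t / r * a + b) := by
    calc _ = ∫⁻ x, (F x ^ t) ^ a * ENNReal.ofReal (|u x| ^ P) ^ b := by
          congr 1; ext x
          rw [ENNReal.mul_rpow_of_nonneg _ _ hm0.le, ← ENNReal.rpow_mul, hta,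
            ENNReal.ofReal_rpow_of_nonneg (by positivity) hm0.le,
            ENNReal.ofReal_rpow_of_nonneg (by positivity) hb0,
            ← Real.rpow_mul (abs_nonneg _), ← Real.rpow_mul (abs_nonneg _), hPb]
      _ ≤ (∫⁻ x, F x ^ t) ^ a * A ^ b :=
          ENNReal.lintegral_mul_norm_pow_le (hFm.pow_const t).aemeasurable hUm.aemeasurable
            ha0 hb0 hab
      _ ≤ (C * A ^ (t / r)) ^ a * A ^ b := by gcongr
      _ = _ := by
          rw [ENNReal.mul_rpow_of_nonneg _ _ ha0, ← ENNReal.rpow_mul, mul_assoc,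
            ← ENNReal.rpow_add_of_nonneg _ _ (by positivity) hb0]
  refine ⟨lt_of_le_of_lt hI ?_, ?_⟩
  · exact (ENNReal.mul_ne_top hCa
      (ENNReal.rpow_ne_top_of_nonneg (by positivity) hfin.ne)).lt_top
  · calc _ ≤ (C ^ a * A ^ (t / r * a + b)) ^ ((p - s) / N) :=
          ENNReal.rpow_le_rpow hI (by positivity)
      _ = D * (A ^ ((N - p) / (N * p))) ^ (2 * q - p) := by
          rw [ENNReal.mul_rpow_of_nonneg _ _ (by positivity), ← ENNReal.rpow_mul,
            ← ENNReal.rpow_mul A, ← ENNReal.rpow_mul A, hexp, hD, ENNReal.rpow_mul]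
      _ ≤ _ := by
          have hDle : D ≤ ENNReal.ofReal (D.toReal + 1) := by
            conv_lhs => rw [← ENNReal.ofReal_toReal hDt]
            exact ENNReal.ofReal_le_ofReal (by linarith)
          gcongr
end

section
/- Let N ≥ 3, 1 < p < N/2 and 0 ≤ μ < μ̄ := ((N−p)/p)^p. There exists a constant C = C(N,p,μ) > 0 such that for every smooth compactly supported function u : ℝ^N → ℝ one has (∬_{ℝ^N×ℝ^N} |u(x)|^p |u(y)|^p / |x−y|^{2p} dx dy)^{1/(2p)} ≤ C · (∫_{ℝ^N} |∇u|^p dx − μ ∫_{ℝ^N} |u(x)|^p/|x|^p dx)^{1/p}, where the quantity inside the parentheses on the right-hand side is nonnegative by Hardy's inequality. -/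
open MeasureTheory

lemma hh_ray {N : ℕ} (u : EuclideanSpace ℝ (Fin N) → ℝ) (hu : ContDiff ℝ 1 u)
    (hc : HasCompactSupport u) (x : EuclideanSpace ℝ (Fin N)) (hx : x ≠ 0) :
    ‖u x‖ₑ ≤ ∫⁻ t in Set.Ioi (1 : ℝ), ‖x‖ₑ * ‖fderiv ℝ u (t • x)‖ₑ := by
  have hf : ContDiff ℝ 1 (fun τ : ℝ => u ((-τ) • x)) := by fun_prop
  have hemb : Topology.IsClosedEmbedding (fun τ : ℝ => (-τ) • x) :=
    (isClosedEmbedding_smul_left hx).comp (Homeomorph.neg ℝ).isClosedEmbedding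
  have hfc : HasCompactSupport (fun τ : ℝ => u ((-τ) • x)) := hc.comp_isClosedEmbedding hemb
  have h := HasCompactSupport.enorm_le_lintegral_Ici_deriv hf hfc (-1)
  simp only [neg_neg, one_smul] at h
  refine h.trans ?_
  have h2 : ∫⁻ t in Set.Ioi (1 : ℝ), ‖x‖ₑ * ‖fderiv ℝ u (t • x)‖ₑ
      = ∫⁻ t in Set.Iic (-1 : ℝ), ‖x‖ₑ * ‖fderiv ℝ u ((-t) • x)‖ₑ := by
    rw [setLIntegral_congr Ioi_ae_eq_Ici]
    have := (Measure.measurePreserving_neg (volume : Measure ℝ)).setLIntegral_comp_preimage_emb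
      (Homeomorph.neg ℝ).measurableEmbedding (fun t => ‖x‖ₑ * ‖fderiv ℝ u (t • x)‖ₑ) (Set.Ici 1)
    rw [← this]
    simp
  rw [h2]
  apply lintegral_mono
  intro t
  have hd : HasDerivAt (fun τ : ℝ => u ((-τ) • x)) (fderiv ℝ u ((-t) • x) (-x)) t := by
    have h1 : HasFDerivAt u (fderiv ℝ u ((-t) • x)) ((-t) • x) :=
      (hu.differentiable (by norm_num) _).hasFDerivAt
    have h3 : HasDerivAt (fun τ : ℝ => (-τ) • x) (-x) t := by
      simpa using ((hasDerivAt_id t).neg.smul_const x)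
    exact h1.comp_hasDerivAt t h3
  simp only
  rw [hd.deriv]
  calc _ ≤ ‖fderiv ℝ u ((-t) • x)‖ₑ * ‖-x‖ₑ := ContinuousLinearMap.le_opENorm _ _
    _ = _ := by rw [enorm_neg, mul_comm]

lemma hh_pow (b : ℝ) (hb : 0 < b) :
    ∫⁻ t in Set.Ioi (1 : ℝ), ENNReal.ofReal (t ^ (-1 - b)) = ENNReal.ofReal (b⁻¹) := by
  rw [← ofReal_integral_eq_lintegral_ofReal]
  · rw [integral_Ioi_rpow_of_lt (by linarith) one_pos]
    congr 1
    rw [Real.one_rpow]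
    have : (-1 - b + 1) = -b := by ring
    rw [this]; field_simp
  · exact integrableOn_Ioi_rpow_of_lt (by linarith) one_pos
  · refine (ae_restrict_iff' measurableSet_Ioi).2 (Filter.Eventually.of_forall ?_)
    intro t ht
    exact Real.rpow_nonneg (by linarith [Set.mem_Ioi.1 ht]) _

lemma hh_holder (p b : ℝ) (hp : 1 < p) (hb : 0 < b) (g : ℝ → ENNReal) (hg : Measurable g) :
    (∫⁻ t in Set.Ioi (1 : ℝ), g t) ^ p ≤ ENNReal.ofReal (b⁻¹) ^ (p - 1) *
      ∫⁻ t in Set.Ioi (1 : ℝ), ENNReal.ofReal (t ^ ((1 + b) * (p - 1))) * g t ^ p := by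
  have hp0 : 0 < p := by linarith
  have hpq := Real.HolderConjugate.conjExponent hp
  set q := p.conjExponent
  have hq0 : 0 < q := hpq.symm.pos
  have hqe : q = p / (p - 1) := rfl
  have hp1 : p - 1 ≠ 0 := by linarith
  set a := (1 + b) * (p - 1) / p with ha
  have key := ENNReal.lintegral_mul_le_Lp_mul_Lq (volume.restrict (Set.Ioi (1 : ℝ))) hpq.symm
    (f := fun t => ENNReal.ofReal (t ^ (-a))) (g := fun t => ENNReal.ofReal (t ^ a) * g t)
    (by fun_prop) (by fun_prop)
  have e1 : ∫⁻ t in Set.Ioi (1 : ℝ), ((fun t => ENNReal.ofReal (t ^ (-a))) *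
      (fun t => ENNReal.ofReal (t ^ a) * g t)) t = ∫⁻ t in Set.Ioi (1 : ℝ), g t := by
    refine setLIntegral_congr_fun measurableSet_Ioi ?_
    intro t ht
    have ht0 : 0 < t := by linarith [Set.mem_Ioi.1 ht]
    simp only [Pi.mul_apply]
    rw [← mul_assoc, ← ENNReal.ofReal_mul (by positivity), ← Real.rpow_add ht0]
    simp
  have e2 : ∫⁻ t in Set.Ioi (1 : ℝ), (ENNReal.ofReal (t ^ (-a))) ^ q
      = ENNReal.ofReal (b⁻¹) := by
    rw [← hh_pow b hb]
    refine setLIntegral_congr_fun measurableSet_Ioi ?_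
    intro t ht
    have ht0 : 0 < t := by linarith [Set.mem_Ioi.1 ht]
    simp only
    rw [ENNReal.ofReal_rpow_of_nonneg (by positivity) hq0.le, ← Real.rpow_mul ht0.le]
    congr 2
    rw [ha, hqe]; field_simp; ring
  have e3 : ∫⁻ t in Set.Ioi (1 : ℝ), (ENNReal.ofReal (t ^ a) * g t) ^ p
      = ∫⁻ t in Set.Ioi (1 : ℝ), ENNReal.ofReal (t ^ ((1 + b) * (p - 1))) * g t ^ p := by
    refine setLIntegral_congr_fun measurableSet_Ioi ?_
    intro t ht
    have ht0 : 0 < t := by linarith [Set.mem_Ioi.1 ht]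
    simp only
    rw [ENNReal.mul_rpow_of_nonneg _ _ hp0.le,
      ENNReal.ofReal_rpow_of_nonneg (by positivity) hp0.le, ← Real.rpow_mul ht0.le]
    congr 3
    rw [ha]; field_simp
  rw [e1, e2, e3] at key
  calc _ ≤ _ := ENNReal.rpow_le_rpow key hp0.le
    _ = _ := by
      rw [ENNReal.mul_rpow_of_nonneg _ _ hp0.le, ← ENNReal.rpow_mul, ← ENNReal.rpow_mul]
      congr 2
      · rw [hqe]; field_simp
      · rw [one_div, inv_mul_cancel₀ hp0.ne', ENNReal.rpow_one]

lemma hh_scale {N : ℕ} (f : EuclideanSpace ℝ (Fin N) → ENNReal) (hf : Measurable f) (t : ℝ)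
    (ht : 0 < t) : ∫⁻ x, f (t • x) = ENNReal.ofReal (t ^ (-(N : ℝ))) * ∫⁻ x, f x := by
  have := Measure.map_addHaar_smul (volume : Measure (EuclideanSpace ℝ (Fin N))) ht.ne'
  rw [← lintegral_map (μ := volume) (g := fun x => t • x) hf (by fun_prop), this,
    lintegral_smul_measure, smul_eq_mul]
  congr 2
  rw [finrank_euclideanSpace_fin, abs_of_pos (by positivity), Real.rpow_neg ht.le,
    Real.rpow_natCast]

lemma hh_hardy {N : ℕ} (hN : 0 < N) (p s b : ℝ) (hp : 1 < p) (hb : 0 < b)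
    (hbs : b * p = N - s) (u : EuclideanSpace ℝ (Fin N) → ℝ) (hu : ContDiff ℝ 1 u)
    (hc : HasCompactSupport u) :
    ∫⁻ x, ‖u x‖ₑ ^ p * ‖x‖ₑ ^ (-s) ≤
      ENNReal.ofReal (b⁻¹) ^ p * ∫⁻ x, ‖fderiv ℝ u x‖ₑ ^ p * ‖x‖ₑ ^ (p - s) := by
  have hp0 : 0 < p := by linarith
  have : Nonempty (Fin N) := ⟨⟨0, hN⟩⟩
  have hD : Continuous (fderiv ℝ u) := hu.continuous_fderiv (by norm_num)
  set B := ENNReal.ofReal (b⁻¹) with hB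
  set G : EuclideanSpace ℝ (Fin N) → ENNReal := fun x => ‖fderiv ℝ u x‖ₑ ^ p * ‖x‖ₑ ^ (p - s)
    with hG
  have hGm : Measurable G := by
    have h1 : Measurable (fun x => ‖fderiv ℝ u x‖ₑ) := hD.enorm.measurable
    exact (h1.pow_const p).mul (measurable_enorm.pow_const _)
  have hne : ∀ᵐ x : EuclideanSpace ℝ (Fin N), x ≠ 0 := by
    simp [ae_iff]
  have step1 : ∀ᵐ x : EuclideanSpace ℝ (Fin N), ‖u x‖ₑ ^ p * ‖x‖ₑ ^ (-s) ≤
      B ^ (p - 1) * ∫⁻ t in Set.Ioi (1 : ℝ),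
        ENNReal.ofReal (t ^ ((1 + b) * (p - 1) - (p - s))) * G (t • x) := by
    filter_upwards [hne] with x hx
    have hx0 : ‖x‖ₑ ≠ 0 := by simpa using hx
    have hx1 : ‖x‖ₑ ≠ ⊤ := enorm_ne_top
    have m1 : Measurable (fun t : ℝ => ‖fderiv ℝ u (t • x)‖ₑ) := by
      have : Continuous (fun t : ℝ => fderiv ℝ u (t • x)) := by fun_prop
      exact this.enorm.measurable
    have h1 := ENNReal.rpow_le_rpow (hh_ray u hu hc x hx) hp0.le
    have h2 := h1.trans (hh_holder p b hp hb _ (m1.const_mul _))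
    calc _ ≤ _ := mul_le_mul_left h2 _
      _ = _ := by
        rw [mul_assoc]
        congr 1
        rw [← lintegral_mul_const']
        · refine setLIntegral_congr_fun measurableSet_Ioi ?_
          intro t ht
          have ht0 : 0 < t := by linarith [Set.mem_Ioi.1 ht]
          have hte : ‖t‖ₑ = ENNReal.ofReal t := by rw [Real.enorm_eq_ofReal ht0.le]
          simp only [hG]
          rw [enorm_smul, hte, ENNReal.mul_rpow_of_ne_top (by simp) hx1,
            ENNReal.ofReal_rpow_of_pos ht0, ENNReal.mul_rpow_of_nonneg _ _ hp0.le,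
            sub_eq_add_neg p s, ENNReal.rpow_add _ _ hx0 hx1, ← sub_eq_add_neg,
            Real.rpow_sub ht0 ((1 + b) * (p - 1)) (p - s), 
            ENNReal.ofReal_div_of_pos (by positivity), div_eq_mul_inv]
          have hz : ENNReal.ofReal (t ^ (p - s)) ≠ 0 := by
            simp; positivity
          have hcan := ENNReal.inv_mul_cancel hz (by simp)
          calc _ = ENNReal.ofReal (t ^ ((1 + b) * (p - 1))) * 1 * (‖x‖ₑ ^ p *
                ‖fderiv ℝ u (t • x)‖ₑ ^ p * ‖x‖ₑ ^ (-s)) := by ring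
            _ = _ := by rw [← hcan]; ring
        · exact ENNReal.rpow_ne_top_of_ne_zero hx0 hx1
  have mj : Measurable (fun z : EuclideanSpace ℝ (Fin N) × ℝ =>
      ENNReal.ofReal (z.2 ^ ((1 + b) * (p - 1) - (p - s))) * G (z.2 • z.1)) := by
    have h1 : Measurable (fun z : EuclideanSpace ℝ (Fin N) × ℝ => z.2 • z.1) := by fun_prop
    have h2 := hGm.comp h1
    have h3 : Measurable (fun z : EuclideanSpace ℝ (Fin N) × ℝ =>
      ENNReal.ofReal (z.2 ^ ((1 + b) * (p - 1) - (p - s)))) := by fun_prop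
    exact h3.mul h2
  calc _ ≤ _ := lintegral_mono_ae step1
    _ = B ^ (p - 1) * ∫⁻ x, ∫⁻ t in Set.Ioi (1 : ℝ),
        ENNReal.ofReal (t ^ ((1 + b) * (p - 1) - (p - s))) * G (t • x) := by
      rw [lintegral_const_mul]
      exact mj.lintegral_prod_right'
    _ = B ^ (p - 1) * ∫⁻ t in Set.Ioi (1 : ℝ), ∫⁻ x,
        ENNReal.ofReal (t ^ ((1 + b) * (p - 1) - (p - s))) * G (t • x) := by
      rw [lintegral_lintegral_swap mj.aemeasurable]
    _ = B ^ (p - 1) * ∫⁻ t in Set.Ioi (1 : ℝ), ENNReal.ofReal (t ^ (-1 - b)) * ∫⁻ x, G x := by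
      congr 1
      refine setLIntegral_congr_fun measurableSet_Ioi ?_
      intro t ht
      have ht0 : 0 < t := by linarith [Set.mem_Ioi.1 ht]
      simp only
      rw [lintegral_const_mul' _ _ (by simp), hh_scale G hGm t ht0, ← mul_assoc,
        ← ENNReal.ofReal_mul (by positivity), ← Real.rpow_add ht0]
      congr 3
      linarith
    _ = B ^ (p - 1) * (B * ∫⁻ x, G x) := by
      rw [lintegral_mul_const _ (by fun_prop), hh_pow b hb]
    _ = _ := by
      rw [← mul_assoc]
      congr 1
      have hB0 : B ≠ 0 := by simp [hB, hb]
      nth_rewrite 2 [← ENNReal.rpow_one B]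
      rw [← ENNReal.rpow_add _ _ hB0 (by simp [hB])]
      simp

lemma hh_hardyT {N : ℕ} (hN : 0 < N) (p s b : ℝ) (hp : 1 < p) (hb : 0 < b)
    (hbs : b * p = N - s) (u : EuclideanSpace ℝ (Fin N) → ℝ) (hu : ContDiff ℝ 1 u)
    (hc : HasCompactSupport u) (c : EuclideanSpace ℝ (Fin N)) :
    ∫⁻ x, ‖u x‖ₑ ^ p * ‖x - c‖ₑ ^ (-s) ≤
      ENNReal.ofReal (b⁻¹) ^ p * ∫⁻ x, ‖fderiv ℝ u x‖ₑ ^ p * ‖x - c‖ₑ ^ (p - s) := by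
  have h := hh_hardy hN p s b hp hb hbs (fun z => u (z + c)) (by fun_prop)
    (hc.comp_homeomorph (Homeomorph.addRight c))
  rw [← lintegral_add_right_eq_self _ c,
    ← lintegral_add_right_eq_self (fun x => ‖fderiv ℝ u x‖ₑ ^ p * ‖x - c‖ₑ ^ (p - s)) c]
  simpa [fderiv_comp_add_right] using h

lemma hh_double {N : ℕ} (hN : 0 < N) (p : ℝ) (hp : 1 < p) (hpN : p < (N : ℝ) / 2) 
    (u : EuclideanSpace ℝ (Fin N) → ℝ) (hu : ContDiff ℝ 1 u) (hc : HasCompactSupport u) :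
    ∫⁻ x, ∫⁻ y, ENNReal.ofReal (|u x| ^ p * |u y| ^ p / ‖x - y‖ ^ (2 * p)) ≤
      ENNReal.ofReal (((N - 2 * p) / p)⁻¹) ^ p * ENNReal.ofReal (((N - p) / p)⁻¹) ^ p *
        (∫⁻ x, ‖fderiv ℝ u x‖ₑ ^ p) ^ 2 := by
  have hp0 : 0 < p := by linarith
  have hD : Continuous (fderiv ℝ u) := hu.continuous_fderiv (by norm_num)
  have hDm : Measurable (fun x => ‖fderiv ℝ u x‖ₑ ^ p) := hD.enorm.measurable.pow_const p
  have hum : Measurable (fun x => ‖u x‖ₑ ^ p) := hu.continuous.enorm.measurable.pow_const p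
  set B₁ := ENNReal.ofReal (((N - 2 * p) / p)⁻¹) ^ p
  set B₂ := ENNReal.ofReal (((N - p) / p)⁻¹) ^ p
  set A := ∫⁻ x, ‖fderiv ℝ u x‖ₑ ^ p with hA
  have hpt : ∀ x y, ENNReal.ofReal (|u x| ^ p * |u y| ^ p / ‖x - y‖ ^ (2 * p)) ≤
      ‖u x‖ₑ ^ p * (‖u y‖ₑ ^ p * ‖y - x‖ₑ ^ (-(2 * p))) := by
    intro x y
    rcases eq_or_ne x y with rfl | hxy
    · simp [Real.zero_rpow (by positivity : 2 * p ≠ 0)]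
    · have hpos : 0 < ‖x - y‖ := norm_pos_iff.2 (sub_ne_zero.2 hxy)
      rw [norm_sub_rev] at hpos
      apply le_of_eq
      rw [norm_sub_rev, div_eq_mul_inv, ← Real.rpow_neg hpos.le,
        ENNReal.ofReal_mul (by positivity), ENNReal.ofReal_mul (by positivity),
        ← ENNReal.ofReal_rpow_of_pos hpos, ofReal_norm,
        ← ENNReal.ofReal_rpow_of_nonneg (abs_nonneg _) hp0.le,
        ← ENNReal.ofReal_rpow_of_nonneg (abs_nonneg _) hp0.le, ← Real.norm_eq_abs,
        ← Real.norm_eq_abs, ofReal_norm, ofReal_norm, mul_assoc]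
  have mk : Measurable (fun z : EuclideanSpace ℝ (Fin N) × EuclideanSpace ℝ (Fin N) =>
      ‖z.2 - z.1‖ₑ ^ (-p)) := by fun_prop
  have hunt : ∀ x, ‖u x‖ₑ ^ p ≠ ⊤ := fun x => ENNReal.rpow_ne_top_of_nonneg hp0.le enorm_ne_top
  have hDnt : ∀ x, ‖fderiv ℝ u x‖ₑ ^ p ≠ ⊤ :=
    fun x => ENNReal.rpow_ne_top_of_nonneg hp0.le enorm_ne_top
  have hBt : B₁ ≠ ⊤ := ENNReal.rpow_ne_top_of_nonneg hp0.le (by simp)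
  have hBt2 : B₂ ≠ ⊤ := ENNReal.rpow_ne_top_of_nonneg hp0.le (by simp)
  calc _ ≤ ∫⁻ x, ∫⁻ y, ‖u x‖ₑ ^ p * (‖u y‖ₑ ^ p * ‖y - x‖ₑ ^ (-(2 * p))) :=
        lintegral_mono fun x => lintegral_mono fun y => hpt x y
    _ ≤ ∫⁻ x, B₁ * ∫⁻ y, ‖u x‖ₑ ^ p * (‖fderiv ℝ u y‖ₑ ^ p * ‖y - x‖ₑ ^ (-p)) := by
        apply lintegral_mono
        intro x
        simp only
        rw [lintegral_const_mul' _ _ (hunt x), lintegral_const_mul' _ _ (hunt x), mul_left_comm]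
        have h := hh_hardyT hN p (2 * p) ((N - 2 * p) / p) hp (div_pos (by linarith) hp0)
          (by field_simp) u hu hc x
        rw [show p - 2 * p = -p by ring] at h
        exact mul_le_mul_right h _
    _ = B₁ * ∫⁻ x, ∫⁻ y, ‖u x‖ₑ ^ p * (‖fderiv ℝ u y‖ₑ ^ p * ‖y - x‖ₑ ^ (-p)) := by
        rw [lintegral_const_mul' _ _ hBt]
    _ = B₁ * ∫⁻ y, ∫⁻ x, ‖u x‖ₑ ^ p * (‖fderiv ℝ u y‖ₑ ^ p * ‖y - x‖ₑ ^ (-p)) := by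
        rw [lintegral_lintegral_swap]
        exact ((hum.comp measurable_fst).mul ((hDm.comp measurable_snd).mul mk)).aemeasurable
    _ ≤ B₁ * ∫⁻ y, ‖fderiv ℝ u y‖ₑ ^ p * (B₂ * A) := by
        apply mul_le_mul_right
        apply lintegral_mono
        intro y
        have h := hh_hardyT hN p p ((N - p) / p) hp (div_pos (by linarith) hp0)
          (by field_simp) u hu hc y
        simp only [sub_self, ENNReal.rpow_zero, mul_one] at h
        calc _ = ∫⁻ x, ‖fderiv ℝ u y‖ₑ ^ p * (‖u x‖ₑ ^ p * ‖x - y‖ₑ ^ (-p)) := by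
              apply lintegral_congr
              intro x
              rw [← enorm_neg (x - y), neg_sub]; ring
          _ ≤ _ := by
              rw [lintegral_const_mul' _ _ (hDnt y)]
              exact mul_le_mul_right h _
    _ = _ := by
        rw [lintegral_mul_const _ hDm]
        ring

theorem stmt_15 (N : ℕ) (hN : 3 ≤ N) (p μ : ℝ) (hp1 : 1 < p) (hpN : p < (N : ℝ) / 2)
    (hμ0 : 0 ≤ μ) (hμ : μ < (((N : ℝ) - p) / p) ^ p) :
    ∃ C : ℝ, 0 < C ∧ ∀ u : EuclideanSpace ℝ (Fin N) → ℝ,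
      ContDiff ℝ (⊤ : ℕ∞) u → HasCompactSupport u →
      (∫⁻ x, ∫⁻ y, ENNReal.ofReal (|u x| ^ p * |u y| ^ p / ‖x - y‖ ^ (2 * p))) ^
          (1 / (2 * p)) ≤
        ENNReal.ofReal (C *
          ((∫ x, ‖fderiv ℝ u x‖ ^ p) - μ * ∫ x, |u x| ^ p / ‖x‖ ^ p) ^ (1 / p)) := by
  have hp0 : 0 < p := by linarith
  have hN0 : 0 < N := by omega
  have hb1 : 0 < ((N : ℝ) - 2 * p) / p := div_pos (by linarith) hp0
  have hb2 : 0 < ((N : ℝ) - p) / p := div_pos (by linarith) hp0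
  set b₁ := ((N : ℝ) - 2 * p) / p with hb1e
  set b₂ := ((N : ℝ) - p) / p with hb2e
  have hM : 0 < b₂ ^ p := by positivity
  set δ := 1 - μ / b₂ ^ p with hδ
  have hδ0 : 0 < δ := by
    rw [hδ, sub_pos, div_lt_one hM]; exact hμ
  set K := (b₁⁻¹) ^ p * (b₂⁻¹) ^ p with hK
  have hK0 : 0 < K := by positivity
  refine ⟨K ^ (1 / (2 * p)) * (δ⁻¹) ^ (1 / p), by positivity, ?_⟩
  intro u hu' hc
  have hu : ContDiff ℝ 1 u := hu'.of_le (by exact_mod_cast le_top)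
  have hD : Continuous (fderiv ℝ u) := hu.continuous_fderiv (by norm_num)
  have hint : Integrable (fun x => ‖fderiv ℝ u x‖ ^ p) := by
    apply Continuous.integrable_of_hasCompactSupport
    · exact hD.norm.rpow_const (fun _ => Or.inr hp0.le)
    · exact (hc.fderiv ℝ).comp_left (g := fun z => ‖z‖ ^ p) (by simp [Real.zero_rpow hp0.ne'])
  set A := ∫ x, ‖fderiv ℝ u x‖ ^ p with hA
  set H := ∫ x, |u x| ^ p / ‖x‖ ^ p with hH
  have hA0 : 0 ≤ A := integral_nonneg fun x => by positivity
  have hAe : ∫⁻ x, ‖fderiv ℝ u x‖ₑ ^ p = ENNReal.ofReal A := by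
    rw [hA, ofReal_integral_eq_lintegral_ofReal hint
      (Filter.Eventually.of_forall fun x => by positivity)]
    apply lintegral_congr
    intro x
    rw [← ENNReal.ofReal_rpow_of_nonneg (norm_nonneg _) hp0.le, ofReal_norm]
  have hHle : H ≤ (b₂ ^ p)⁻¹ * A := by
    have h := hh_hardy hN0 p p b₂ hp1 hb2 (by rw [hb2e]; field_simp) u hu hc
    simp only [sub_self, ENNReal.rpow_zero, mul_one] at h
    rw [hAe, ENNReal.ofReal_rpow_of_pos (by positivity), ← ENNReal.ofReal_mul (by positivity),
      Real.inv_rpow hb2.le] at h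
    have h0 : 0 ≤ (b₂ ^ p)⁻¹ * A := by positivity
    by_cases hi : Integrable (fun x => |u x| ^ p / ‖x‖ ^ p)
    · rw [← ENNReal.ofReal_le_ofReal_iff h0, hH, ofReal_integral_eq_lintegral_ofReal hi
        (Filter.Eventually.of_forall fun x => by positivity)]
      refine le_trans (lintegral_mono fun x => ?_) h
      rcases eq_or_ne x 0 with rfl | hx
      · simp [Real.zero_rpow hp0.ne']
      · have hpos : 0 < ‖x‖ := norm_pos_iff.2 hx
        apply le_of_eq
        rw [div_eq_mul_inv, ← Real.rpow_neg hpos.le, ENNReal.ofReal_mul (by positivity),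
          ← ENNReal.ofReal_rpow_of_pos hpos, ofReal_norm,
          ← ENNReal.ofReal_rpow_of_nonneg (abs_nonneg _) hp0.le, ← Real.norm_eq_abs, ofReal_norm]
    · rw [hH, integral_undef hi]; exact h0
  have hq : δ * A ≤ A - μ * H := by
    have := mul_le_mul_of_nonneg_left hHle hμ0
    rw [hδ, div_eq_mul_inv]; linarith
  have hdb := hh_double hN0 p hp1 hpN u hu hc
  rw [hAe, ← hb1e, ← hb2e, ENNReal.ofReal_rpow_of_pos (by positivity),
    ENNReal.ofReal_rpow_of_pos (by positivity), ← ENNReal.ofReal_mul (by positivity),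
    ← ENNReal.ofReal_pow hA0, ← ENNReal.ofReal_mul (by positivity), ← hK] at hdb
  refine (ENNReal.rpow_le_rpow hdb (by positivity)).trans ?_
  rw [ENNReal.ofReal_rpow_of_nonneg (by positivity) (by positivity)]
  apply ENNReal.ofReal_le_ofReal
  rw [Real.mul_rpow hK0.le (by positivity), mul_assoc,
    ← Real.mul_rpow (by positivity) (le_trans (by positivity) hq)]
  apply mul_le_mul_of_nonneg_left _ (by positivity)
  rw [← Real.rpow_natCast, ← Real.rpow_mul hA0]
  rw [show ((2 : ℕ) : ℝ) * (1 / (2 * p)) = 1 / p by push_cast; field_simp]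
  apply Real.rpow_le_rpow hA0 _ (by positivity)
  rw [inv_mul_eq_div, le_div_iff₀ hδ0]
  linarith
end

section
/- Let N ≥ 2, 1 < p < N, 0 ≤ s < p, s < σ < N, 0 < σ + s ≤ 2p, and set p_{s,σ} := (2N−σ−s)p/(2(N−p)). There exists a constant C = C(N,p,s,σ) > 0 such that for every smooth compactly supported function u : ℝ^N → ℝ one has (∬_{ℝ^N×ℝ^N} |u(x)|^{p_{s,σ}} |u(y)|^{p_{s,σ}} / (|x|^{s} |x−y|^{σ}) dx dy)^{1/(2p_{s,σ})} ≤ C · (∫_{ℝ^N} |∇u|^p dx)^{1/p}. -/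
open MeasureTheory

lemma ball_pot (N : ℕ) (hN : 1 ≤ N) (σ : ℝ) (hσN : σ < (N : ℝ)) :
    ∃ C : ℝ, 0 < C ∧ ∀ R : ℝ, 0 < R →
      ∫⁻ x in Metric.ball (0 : EuclideanSpace ℝ (Fin N)) R, ENNReal.ofReal (‖x‖ ^ (-σ)) ≤
        ENNReal.ofReal (C * R ^ ((N : ℝ) - σ)) := by
  have hint : ∀ R : ℝ, IntegrableOn (fun x : EuclideanSpace ℝ (Fin N) => ‖x‖ ^ (-σ))
      (Metric.ball 0 R) volume := by
    intro R
    refine integrableOn_ball_of_norm_le_rpow (C := 1) (α := σ) (by simpa using hN)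
      (by simpa using hσN) ?_ ?_
    · refine Filter.Eventually.of_forall fun x => ?_
      rw [Real.norm_of_nonneg (by positivity)]; simp
    · exact (by fun_prop : Measurable fun x : EuclideanSpace ℝ (Fin N) => ‖x‖ ^ (-σ)).aestronglyMeasurable
  refine ⟨(∫ x in Metric.ball (0 : EuclideanSpace ℝ (Fin N)) 1, ‖x‖ ^ (-σ)) + 1, ?_, ?_⟩
  · have : 0 ≤ ∫ x in Metric.ball (0 : EuclideanSpace ℝ (Fin N)) 1, ‖x‖ ^ (-σ) :=
      integral_nonneg fun x => by positivity
    linarith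
  intro R hR
  rw [← ofReal_integral_eq_lintegral_ofReal (hint R)
    (Filter.Eventually.of_forall fun x => by positivity)]
  apply ENNReal.ofReal_le_ofReal
  have h := Measure.setIntegral_comp_smul_of_pos (volume : Measure (EuclideanSpace ℝ (Fin N)))
    (fun x => ‖x‖ ^ (-σ)) (Metric.ball 0 1) hR
  rw [smul_unitBall_of_pos hR] at h
  have h2 : ∫ x in Metric.ball (0 : EuclideanSpace ℝ (Fin N)) 1, ‖R • x‖ ^ (-σ)
      = R ^ (-σ) * ∫ x in Metric.ball (0 : EuclideanSpace ℝ (Fin N)) 1, ‖x‖ ^ (-σ) := by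
    rw [← integral_const_mul]
    congr 1
    ext x
    rw [norm_smul, Real.norm_of_nonneg hR.le, Real.mul_rpow hR.le (norm_nonneg _)]
  rw [h2] at h
  simp only [finrank_euclideanSpace, Fintype.card_fin, smul_eq_mul] at h
  have hRN : (0:ℝ) < R ^ N := by positivity
  have h3 : ∫ x in Metric.ball (0 : EuclideanSpace ℝ (Fin N)) R, ‖x‖ ^ (-σ) =
      R ^ ((N : ℝ) - σ) * ∫ x in Metric.ball (0 : EuclideanSpace ℝ (Fin N)) 1, ‖x‖ ^ (-σ) := by
    rw [sub_eq_add_neg, Real.rpow_add hR, Real.rpow_natCast, mul_assoc, h, ← mul_assoc,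
      mul_inv_cancel₀ hRN.ne', one_mul]
  rw [h3]
  have : (0:ℝ) < R ^ ((N : ℝ) - σ) := by positivity
  nlinarith

lemma set_pot (N : ℕ) (hN : 1 ≤ N) (σ : ℝ) (hσ0 : 0 ≤ σ) (hσN : σ < (N : ℝ)) :
    ∃ C : ℝ, 0 < C ∧ ∀ b : ℝ, 0 < b → ∀ A : Set (EuclideanSpace ℝ (Fin N)), 
      volume A ≤ ENNReal.ofReal b → ∀ a : EuclideanSpace ℝ (Fin N),
      ∫⁻ x in A, ENNReal.ofReal (‖x - a‖ ^ (-σ)) ≤ ENNReal.ofReal (C * b ^ (1 - σ / N)) := by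
  obtain ⟨C, hC, h⟩ := ball_pot N hN σ hσN
  refine ⟨C + 1, by linarith, fun b hb A hA a => ?_⟩
  have hN0 : (0:ℝ) < N := by exact_mod_cast hN
  set R : ℝ := b ^ (1 / (N:ℝ)) with hRdef
  have hR : 0 < R := by positivity
  have hRp : ∀ t : ℝ, R ^ t = b ^ (t / N) := fun t => by
    rw [hRdef, ← Real.rpow_mul hb.le]; congr 1; ring
  have e1 : ∫⁻ x in Metric.ball a R, ENNReal.ofReal (‖x - a‖ ^ (-σ)) ≤
      ENNReal.ofReal (C * b ^ (1 - σ / N)) := by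
    have := h R hR
    rw [hRp, sub_div, div_self hN0.ne'] at this
    refine le_trans (le_of_eq ?_) this
    rw [← lintegral_indicator measurableSet_ball, ← lintegral_indicator measurableSet_ball]
    symm
    rw [← lintegral_sub_right_eq_self _ a]
    congr 1
    ext x
    simp [Set.indicator, dist_eq_norm]
  have e2 : ∫⁻ x in A \ Metric.ball a R, ENNReal.ofReal (‖x - a‖ ^ (-σ)) ≤
      ENNReal.ofReal (b ^ (1 - σ / N)) := by
    calc _ ≤ ∫⁻ x in A \ Metric.ball a R, ENNReal.ofReal (R ^ (-σ)) := by
          apply setLIntegral_mono_ae (by fun_prop)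
          refine Filter.Eventually.of_forall fun x hx => ENNReal.ofReal_le_ofReal ?_
          have : R ≤ ‖x - a‖ := by simpa [dist_eq_norm] using hx.2
          exact Real.rpow_le_rpow_of_nonpos hR this (by linarith)
      _ ≤ ENNReal.ofReal (R ^ (-σ)) * ENNReal.ofReal b := by
          rw [setLIntegral_const]
          gcongr
          exact (measure_mono Set.sdiff_subset).trans hA
      _ = _ := by
          rw [← ENNReal.ofReal_mul (by positivity), hRp]
          congr 1
          rw [sub_eq_add_neg, add_comm, Real.rpow_add hb, Real.rpow_one, neg_div]
  calc _ ≤ ∫⁻ x in Metric.ball a R ∪ (A \ Metric.ball a R), ENNReal.ofReal (‖x - a‖ ^ (-σ)) :=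
        lintegral_mono_set (by intro x hx; by_cases h : x ∈ Metric.ball a R <;> simp_all)
    _ ≤ _ := lintegral_union_le _ _ _
    _ ≤ _ := add_le_add e1 e2
    _ = _ := by rw [← ENNReal.ofReal_add (by positivity) (by positivity)]; ring_nf

lemma ker_pot (N : ℕ) (hN : 1 ≤ N) (s σ : ℝ) (hs0 : 0 ≤ s) (hsσ : s < σ) (hσN : σ < (N : ℝ)) :
    ∃ C : ℝ, 0 < C ∧ ∀ a b : ℝ, 0 < a → 0 < b → ∀ A B : Set (EuclideanSpace ℝ (Fin N)),
      volume A ≤ ENNReal.ofReal a → volume B ≤ ENNReal.ofReal b → 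
      MeasurableSet A → MeasurableSet B →
      ∫⁻ x in A, ∫⁻ y in B, ENNReal.ofReal (‖x‖ ^ (-s)) * ENNReal.ofReal (‖x - y‖ ^ (-σ))
       ≤ ENNReal.ofReal (C * (a * b) ^ (1 - (σ + s) / (2 * N))) := by
  obtain ⟨C₁, hC₁, h₁⟩ := set_pot N hN s hs0 (hsσ.trans hσN)
  obtain ⟨C₂, hC₂, h₂⟩ := set_pot N hN σ (hs0.trans hsσ.le) hσN
  obtain ⟨C₃, hC₃, h₃⟩ := ball_pot N hN s (hsσ.trans hσN)
  have hN0 : (0:ℝ) < N := by exact_mod_cast hN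
  have arith : ∀ m M : ℝ, 0 < m → m ≤ M → m ^ (1 - s / N) * M ^ (1 - σ / N) ≤
      (m * M) ^ (1 - (σ + s) / (2 * N)) := by
    intro m M hm hmM
    have hM : 0 < M := hm.trans_le hmM
    have e1 : (1 - s / N) = (1 - (σ + s) / (2 * N)) + (σ - s) / (2 * N) := by field_simp; ring
    have e2 : (1 - (σ + s) / (2 * N)) = (1 - σ / N) + (σ - s) / (2 * N) := by field_simp; ring
    rw [Real.mul_rpow hm.le hM.le, e1, Real.rpow_add hm]
    nth_rewrite 3 [e2]
    rw [Real.rpow_add hM]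
    have : m ^ ((σ - s) / (2 * N)) ≤ M ^ ((σ - s) / (2 * N)) :=
      Real.rpow_le_rpow hm.le hmM (div_nonneg (by linarith) (by positivity))
    have p1 : 0 < m ^ (1 - (σ + s) / (2 * N)) := by positivity
    have p2 : 0 < M ^ (1 - σ / N) := by positivity
    calc _ = (m ^ (1 - (σ + s) / (2 * N)) * M ^ (1 - σ / N)) * m ^ ((σ - s) / (2 * N)) := by ring
      _ ≤ (m ^ (1 - (σ + s) / (2 * N)) * M ^ (1 - σ / N)) * M ^ ((σ - s) / (2 * N)) := by gcongr
      _ = _ := by ring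
  have inner : ∀ b : ℝ, 0 < b → ∀ A B : Set (EuclideanSpace ℝ (Fin N)),
      volume B ≤ ENNReal.ofReal b → 
      ∫⁻ x in A, ∫⁻ y in B, ENNReal.ofReal (‖x‖ ^ (-s)) * ENNReal.ofReal (‖x - y‖ ^ (-σ)) ≤
       (∫⁻ x in A, ENNReal.ofReal (‖x‖ ^ (-s))) * ENNReal.ofReal (C₂ * b ^ (1 - σ / N)) := by
    intro b hb A B hB
    rw [← lintegral_mul_const _ (by fun_prop)]
    refine lintegral_mono fun x => ?_
    rw [lintegral_const_mul _ (by fun_prop)]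
    gcongr
    simpa only [norm_sub_rev] using h₂ b hb B hB x
  refine ⟨C₁ * C₂ + C₃ * C₂ + C₂, by positivity, fun a b ha hb A B hA hB mA mB => ?_⟩
  rcases le_total a b with hab | hab
  · refine (inner b hb A B hB).trans ?_
    have := h₁ a ha A hA 0
    simp only [sub_zero] at this
    refine (mul_le_mul_left this _).trans ?_
    rw [← ENNReal.ofReal_mul (by positivity)]
    apply ENNReal.ofReal_le_ofReal
    have := arith a b ha hab
    have p : 0 < (a * b) ^ (1 - (σ + s) / (2 * N)) := by positivity
    calc _ = C₁ * C₂ * (a ^ (1 - s / N) * b ^ (1 - σ / N)) := by ring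
      _ ≤ C₁ * C₂ * (a * b) ^ (1 - (σ + s) / (2 * N)) := by gcongr
      _ ≤ _ := by gcongr; nlinarith [mul_pos hC₃ hC₂]
  · set R : ℝ := b ^ (1 / (N:ℝ)) with hRdef
    have hR : 0 < R := by positivity
    have hRp : ∀ t : ℝ, R ^ t = b ^ (t / N) := fun t => by
      rw [hRdef, ← Real.rpow_mul hb.le]; congr 1; ring
    have key := arith b a hb hab
    rw [mul_comm b a] at key
    have e1 : ∫⁻ x in Metric.ball 0 R, ∫⁻ y in B, ENNReal.ofReal (‖x‖ ^ (-s)) * 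
        ENNReal.ofReal (‖x - y‖ ^ (-σ)) ≤ 
        ENNReal.ofReal (C₃ * C₂ * (a * b) ^ (1 - (σ + s) / (2 * N))) := by
      refine (inner b hb _ B hB).trans ?_
      refine (mul_le_mul_left (h₃ R hR) _).trans ?_
      rw [← ENNReal.ofReal_mul (by positivity)]
      apply ENNReal.ofReal_le_ofReal
      rw [hRp, sub_div, div_self hN0.ne']
      have : b ^ (1 - σ / N) ≤ a ^ (1 - σ / N) := 
        Real.rpow_le_rpow hb.le hab (by rw [sub_nonneg, div_le_one hN0]; exact hσN.le)
      calc _ = C₃ * C₂ * (b ^ (1 - s / N) * b ^ (1 - σ / N)) := by ring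
        _ ≤ C₃ * C₂ * (b ^ (1 - s / N) * a ^ (1 - σ / N)) := by gcongr
        _ ≤ _ := by gcongr
    have e2 : ∫⁻ x in A \ Metric.ball 0 R, ∫⁻ y in B, ENNReal.ofReal (‖x‖ ^ (-s)) * 
        ENNReal.ofReal (‖x - y‖ ^ (-σ)) ≤ 
        ENNReal.ofReal (C₂ * (a * b) ^ (1 - (σ + s) / (2 * N))) := by
      calc _ ≤ ∫⁻ x in A \ Metric.ball 0 R, ∫⁻ y in B, ENNReal.ofReal (R ^ (-s)) * 
                ENNReal.ofReal (‖x - y‖ ^ (-σ)) := by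
            refine setLIntegral_mono' (mA.diff measurableSet_ball) fun x hx => ?_
            refine lintegral_mono fun y => ?_
            refine mul_le_mul_left (ENNReal.ofReal_le_ofReal ?_) _
            have : R ≤ ‖x‖ := by simpa using hx.2
            exact Real.rpow_le_rpow_of_nonpos hR this (by linarith)
        _ ≤ ∫⁻ x in A, ∫⁻ y in B, ENNReal.ofReal (R ^ (-s)) * 
                ENNReal.ofReal (‖x - y‖ ^ (-σ)) := lintegral_mono_set Set.sdiff_subset
        _ = ∫⁻ y in B, ∫⁻ x in A, ENNReal.ofReal (R ^ (-s)) * 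
                ENNReal.ofReal (‖x - y‖ ^ (-σ)) := 
            lintegral_lintegral_swap (by fun_prop)
        _ ≤ ∫⁻ y in B, ENNReal.ofReal (R ^ (-s)) * ENNReal.ofReal (C₂ * a ^ (1 - σ / N)) := by
            refine lintegral_mono fun y => ?_
            rw [lintegral_const_mul _ (by fun_prop)]
            gcongr
            exact h₂ a ha A hA y
        _ ≤ ENNReal.ofReal (R ^ (-s)) * ENNReal.ofReal (C₂ * a ^ (1 - σ / N)) * ENNReal.ofReal b := by
            rw [setLIntegral_const]
            gcongr
        _ ≤ _ := by
            rw [← ENNReal.ofReal_mul (by positivity), ← ENNReal.ofReal_mul (by positivity)]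
            apply ENNReal.ofReal_le_ofReal
            calc _ = C₂ * (b ^ (1 - s / N) * a ^ (1 - σ / N)) := by
                  rw [hRp, sub_eq_add_neg 1 (s / N), Real.rpow_add hb, Real.rpow_one, neg_div]; ring
              _ ≤ _ := by gcongr
    calc _ ≤ ∫⁻ x in Metric.ball 0 R ∪ (A \ Metric.ball 0 R), ∫⁻ y in B, 
              ENNReal.ofReal (‖x‖ ^ (-s)) * ENNReal.ofReal (‖x - y‖ ^ (-σ)) :=
          lintegral_mono_set (by intro x hx; by_cases h : x ∈ Metric.ball 0 R <;> simp_all)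
      _ ≤ _ := lintegral_union_le _ _ _
      _ ≤ _ := add_le_add e1 e2
      _ ≤ _ := by 
        rw [← ENNReal.ofReal_add (by positivity) (by positivity)]
        apply ENNReal.ofReal_le_ofReal
        have p : 0 < (a * b) ^ (1 - (σ + s) / (2 * N)) := by positivity
        nlinarith [mul_pos (mul_pos hC₁ hC₂) p]


lemma st_deriv : ∃ M : ℝ, 0 < M ∧ (∀ t, |deriv Real.smoothTransition t| ≤ M) ∧
    ∀ t, (t ≤ 0 ∨ 1 ≤ t) → deriv Real.smoothTransition t = 0 := by
  have h0 : ∀ t, (t ≤ 0 ∨ 1 ≤ t) → deriv Real.smoothTransition t = 0 := by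
    rintro t (ht | ht)
    · apply IsLocalMin.deriv_eq_zero
      refine Filter.Eventually.of_forall fun x => ?_
      rw [Real.smoothTransition.zero_of_nonpos ht]; exact Real.smoothTransition.nonneg x
    · apply IsLocalMax.deriv_eq_zero
      refine Filter.Eventually.of_forall fun x => ?_
      rw [Real.smoothTransition.one_of_one_le ht]; exact Real.smoothTransition.le_one x
  have hc : Continuous (deriv Real.smoothTransition) :=
    (Real.smoothTransition.contDiff (n := 1)).continuous_deriv le_rfl
  obtain ⟨M, hM⟩ := (isCompact_Icc (a := (0:ℝ)) (b := 1)).exists_bound_of_continuousOn hc.continuousOn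
  refine ⟨|M| + 1, by positivity, fun t => ?_, h0⟩
  by_cases ht : t ∈ Set.Icc (0:ℝ) 1
  · have := hM t ht
    rw [Real.norm_eq_abs] at this
    linarith [le_abs_self M]
  · rw [h0 t, abs_zero]
    · positivity
    · by_contra! h
      exact ht ⟨h.1.le, h.2.le⟩

lemma eLp_ind_bound {X F : Type*} [MeasurableSpace X] {μ : Measure X} [NormedAddCommGroup F]
    (f g : X → F) (p : NNReal) (hp0 : 0 < (p:ℝ)) (A : Set X) (mA : MeasurableSet A) (c : ℝ)
    (h : ∀ x, ‖f x‖ ≤ c * ‖A.indicator g x‖) :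
    eLpNorm f p μ ≤ ENNReal.ofReal c * (∫⁻ x in A, ‖g x‖ₑ ^ (p:ℝ) ∂μ) ^ (1 / (p:ℝ)) := by
  have := eLpNorm_le_mul_eLpNorm_of_ae_le_mul (μ := μ)
    (Filter.Eventually.of_forall h) (p : ENNReal)
  rw [eLpNorm_indicator_eq_eLpNorm_restrict mA,
    eLpNorm_nnreal_eq_lintegral (f := g) (by rintro rfl; simp at hp0)] at this
  exact this

set_option maxHeartbeats 1000000 in
lemma level_sob (N : ℕ) (hN : 1 ≤ N) (p : ℝ) (hp1 : 1 < p) (hpN : p < (N : ℝ)) :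
    ∃ C : NNReal, ∀ u : EuclideanSpace ℝ (Fin N) → ℝ,
      ContDiff ℝ (⊤ : ℕ∞) u → HasCompactSupport u → ∀ τ : ℝ, 0 < τ →
      ENNReal.ofReal (√τ) * volume {x | 2 * τ ≤ u x ^ 2} ^ (1 / p - 1 / N) ≤
        C * (∫⁻ x in {x | τ < u x ^ 2 ∧ u x ^ 2 < 2 * τ}, ‖fderiv ℝ u x‖ₑ ^ p) ^ (1 / p) := by
  obtain ⟨M, hM, hMb, hM0⟩ := st_deriv
  have hN0 : (0:ℝ) < N := by exact_mod_cast hN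
  have hp0 : 0 < p := by linarith
  lift p to NNReal using hp0.le
  have hpos : 0 < 1 / (p:ℝ) - 1 / N := by
    rw [sub_pos]; exact one_div_lt_one_div_of_lt hp0 hpN
  obtain ⟨p', hp'⟩ : ∃ p' : NNReal, (p' : ℝ) = (1 / (p:ℝ) - 1 / N)⁻¹ :=
    ⟨⟨_, (inv_pos.2 hpos).le⟩, rfl⟩
  have hp'0 : 0 < (p':ℝ) := by rw [hp']; positivity
  set S := SNormLESNormFDerivOfEqConst ℝ (volume : Measure (EuclideanSpace ℝ (Fin N))) p with hS
  refine ⟨S * (Real.toNNReal (4 * M)), fun u hu hc τ hτ => ?_⟩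
  have hsq : 0 < √τ := Real.sqrt_pos.2 hτ
  have hsq2 : √τ * √τ = τ := Real.mul_self_sqrt hτ.le
  set v : EuclideanSpace ℝ (Fin N) → ℝ := fun x => Real.smoothTransition (u x ^ 2 / τ - 1) with hv
  have hu1 : ContDiff ℝ 1 u := hu.of_le (by exact_mod_cast le_top)
  have hv1 : ContDiff ℝ 1 v :=
    (Real.smoothTransition.contDiff (n := 1)).comp (((hu1.pow 2).div_const τ).sub contDiff_const)
  have hvc : HasCompactSupport v := by
    refine hc.comp_left (g := fun t : ℝ => Real.smoothTransition (t ^ 2 / τ - 1)) ?_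
    apply Real.smoothTransition.zero_of_nonpos; norm_num
  have sob := eLpNorm_le_eLpNorm_fderiv_of_eq (volume : Measure (EuclideanSpace ℝ (Fin N)))
    hv1 hvc (p := p) (p' := p') (by exact_mod_cast hp1.le) (by simp; omega)
    (by rw [hp', inv_inv]; simp)
  rw [← hS] at sob
  set A : Set (EuclideanSpace ℝ (Fin N)) := {x | τ < u x ^ 2 ∧ u x ^ 2 < 2 * τ} with hA
  have hcu : Continuous u := hu1.continuous
  have mA : MeasurableSet A := by
    have h1 : IsOpen {x | τ < u x ^ 2} := isOpen_lt (by fun_prop) (by fun_prop)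
    have h2 : IsOpen {x | u x ^ 2 < 2 * τ} := isOpen_lt (by fun_prop) (by fun_prop)
    exact (h1.inter h2).measurableSet
  have mE : MeasurableSet {x | 2 * τ ≤ u x ^ 2} :=
    (isClosed_le (by fun_prop) (by fun_prop)).measurableSet
  have low : volume {x | 2 * τ ≤ u x ^ 2} ^ (1 / (p:ℝ) - 1 / N) ≤ eLpNorm v p' volume := by
    have h1 := eLpNorm_indicator_const (μ := volume) (c := (1:ℝ)) (p := (p':ENNReal)) mE
      (by simpa using fun h => hp'0.ne' (by simp [h])) (by simp)
    have h2 : eLpNorm ({x | 2 * τ ≤ u x ^ 2}.indicator fun _ => (1:ℝ)) p' volume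
        ≤ eLpNorm v p' volume := by
      apply eLpNorm_mono
      intro x
      by_cases hx : 2 * τ ≤ u x ^ 2
      · have : v x = 1 := by
          apply Real.smoothTransition.one_of_one_le
          have : 2 ≤ u x ^ 2 / τ := by rw [le_div_iff₀ hτ]; exact hx
          linarith
        simp [Set.indicator, hx, this]
      · simp [Set.indicator, hx]
    rw [h1] at h2
    refine le_trans (le_of_eq ?_) h2
    simp [hp']
  have grad : ∀ x, ‖fderiv ℝ v x‖ ≤ (4 * M / √τ) * ‖A.indicator (fderiv ℝ u) x‖ := by
    intro x
    have hd : HasFDerivAt u (fderiv ℝ u x) x :=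
      (hu1.differentiable one_ne_zero x).hasFDerivAt
    have hg : HasDerivAt (fun t : ℝ => Real.smoothTransition (t ^ 2 / τ - 1))
        (deriv Real.smoothTransition (u x ^ 2 / τ - 1) * (2 * u x / τ)) (u x) := by
      have h1 : HasDerivAt Real.smoothTransition (deriv Real.smoothTransition (u x ^ 2 / τ - 1))
        (u x ^ 2 / τ - 1) :=
        ((Real.smoothTransition.contDiff (n := 1)).differentiable one_ne_zero _).hasDerivAt
      have h2 : HasDerivAt (fun t : ℝ => t ^ 2 / τ - 1) (2 * u x / τ) (u x) := by
        have := ((hasDerivAt_pow 2 (u x)).div_const τ).sub_const 1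
        simpa using this
      exact HasDerivAt.comp (u x) h1 h2
    have hf : fderiv ℝ v x = (deriv Real.smoothTransition (u x ^ 2 / τ - 1) * (2 * u x / τ)) •
        fderiv ℝ u x := (hg.comp_hasFDerivAt x hd).fderiv
    rw [hf, norm_smul]
    by_cases hx : x ∈ A
    · rw [Set.indicator_of_mem hx]
      gcongr
      rw [norm_mul, Real.norm_eq_abs, Real.norm_eq_abs]
      have hb : |u x| ≤ 2 * √τ := by
        apply abs_le_of_sq_le_sq _ (by positivity)
        nlinarith [hx.2]
      have hb2 : |2 * u x / τ| ≤ 4 / √τ := by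
        rw [abs_div, abs_mul, abs_two, abs_of_pos hτ, div_le_div_iff₀ hτ hsq]
        nlinarith
      calc _ ≤ M * (4 / √τ) := by gcongr; exact hMb _
        _ = _ := by ring
    · rw [hM0]
      · simp [Set.indicator_of_notMem hx]
      · by_contra! h
        apply hx
        constructor
        · have : 1 < u x ^ 2 / τ := by linarith [h.1]
          rwa [one_lt_div hτ] at this
        · have : u x ^ 2 / τ < 2 := by linarith [h.2]
          rwa [div_lt_iff₀ hτ] at this
  have up : eLpNorm (fderiv ℝ v) p volume ≤ ENNReal.ofReal (4 * M / √τ) *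
      (∫⁻ x in A, ‖fderiv ℝ u x‖ₑ ^ (p:ℝ)) ^ (1 / (p:ℝ)) := by
    exact eLp_ind_bound _ _ p hp0 A mA _ grad
  calc _ ≤ ENNReal.ofReal √τ * (S * (ENNReal.ofReal (4 * M / √τ) *
      (∫⁻ x in A, ‖fderiv ℝ u x‖ₑ ^ (p:ℝ)) ^ (1 / (p:ℝ)))) := by
        gcongr
        exact low.trans (sob.trans (by gcongr))
    _ = S * (ENNReal.ofReal √τ * ENNReal.ofReal (4 * M / √τ)) *
      (∫⁻ x in A, ‖fderiv ℝ u x‖ₑ ^ (p:ℝ)) ^ (1 / (p:ℝ)) := by ring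
    _ = _ := by
      rw [← ENNReal.ofReal_mul hsq.le, mul_div_cancel₀ _ hsq.ne']
      simp [ENNReal.ofReal]

lemma ker_pot' (N : ℕ) (hN : 1 ≤ N) (s σ : ℝ) (hs0 : 0 ≤ s) (hsσ : s < σ) (hσN : σ < (N : ℝ)) :
    ∃ C : ℝ, 0 < C ∧ ∀ A B : Set (EuclideanSpace ℝ (Fin N)),
      volume A ≠ ⊤ → volume B ≠ ⊤ → MeasurableSet A → MeasurableSet B →
      ∫⁻ x in A, ∫⁻ y in B, ENNReal.ofReal (‖x‖ ^ (-s)) * ENNReal.ofReal (‖x - y‖ ^ (-σ))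
       ≤ ENNReal.ofReal C * (volume A ^ (1 - (σ + s) / (2 * N)) *
          volume B ^ (1 - (σ + s) / (2 * N))) := by
  obtain ⟨C, hC, h⟩ := ker_pot N hN s σ hs0 hsσ hσN
  refine ⟨C, hC, fun A B hA hB mA mB => ?_⟩
  by_cases hA0 : volume A = 0
  · rw [setLIntegral_measure_zero _ _ hA0]; exact zero_le
  by_cases hB0 : volume B = 0
  · simp only [setLIntegral_measure_zero _ _ hB0]; simp
  have ha : 0 < (volume A).toReal := ENNReal.toReal_pos hA0 hA
  have hb : 0 < (volume B).toReal := ENNReal.toReal_pos hB0 hB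
  have := h _ _ ha hb A B (by rw [ENNReal.ofReal_toReal hA]) (by rw [ENNReal.ofReal_toReal hB]) mA mB
  refine this.trans (le_of_eq ?_)
  rw [ENNReal.ofReal_mul hC.le, Real.mul_rpow ha.le hb.le, ENNReal.ofReal_mul (by positivity),
    ← ENNReal.ofReal_rpow_of_pos ha, ← ENNReal.ofReal_rpow_of_pos hb, ENNReal.ofReal_toReal hA,
    ENNReal.ofReal_toReal hB]

lemma rpow_le_levels (t q : ℝ) (hq : 0 < q) :
    ENNReal.ofReal (|t| ^ q) ≤ ∑' k : ℤ, ENNReal.ofReal (2 * √(2 ^ k)) ^ q *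
      (if 2 * 2 ^ k ≤ t ^ 2 then 1 else 0) := by
  by_cases ht : t = 0
  · subst ht; simp [Real.zero_rpow hq.ne']
  obtain ⟨n, hn1, hn2⟩ := exists_mem_Ico_zpow (x := t ^ 2) (y := 2) (by positivity) one_lt_two
  have e0 : (2:ℝ) * 2 ^ (n - 1) = 2 ^ n := by
    rw [← zpow_one_add₀ two_ne_zero]; congr 1; ring
  refine le_trans ?_ (ENNReal.le_tsum (n - 1))
  rw [if_pos (by rw [e0]; exact hn1), mul_one, ENNReal.ofReal_rpow_of_nonneg (by positivity) hq.le]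
  apply ENNReal.ofReal_le_ofReal
  refine Real.rpow_le_rpow (abs_nonneg _) ?_ hq.le
  apply abs_le_of_sq_le_sq _ (by positivity)
  rw [mul_pow, Real.sq_sqrt (by positivity)]
  have e1 : (2:ℝ) ^ (n + 1) = 2 ^ n * 2 := zpow_add_one₀ two_ne_zero n
  nlinarith

lemma lint_tsum2 {X : Type*} [MeasurableSpace X] {μ : Measure X} [SFinite μ]
    (F : ℤ → ℤ → X → X → ENNReal) (mF : ∀ k l, Measurable (Function.uncurry (F k l))) :
    ∫⁻ x, ∫⁻ y, ∑' k, ∑' l, F k l x y ∂μ ∂μ = ∑' k, ∑' l, ∫⁻ x, ∫⁻ y, F k l x y ∂μ ∂μ := by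
  have m1 : ∀ x k l, Measurable (F k l x) := fun x k l => (mF k l).of_uncurry_left
  have m2 : ∀ k l, Measurable fun x => ∫⁻ y, F k l x y ∂μ :=
    fun k l => (mF k l).lintegral_prod_right
  have i1 : ∀ x, ∫⁻ y, ∑' k, ∑' l, F k l x y ∂μ = ∑' k, ∑' l, ∫⁻ y, F k l x y ∂μ := by
    intro x
    rw [lintegral_tsum fun k => (Measurable.ennreal_tsum fun l => m1 x k l).aemeasurable]
    refine tsum_congr fun k => ?_
    rw [lintegral_tsum fun l => (m1 x k l).aemeasurable]
  simp only [i1]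
  rw [lintegral_tsum fun k => (Measurable.ennreal_tsum fun l => m2 k l).aemeasurable]
  refine tsum_congr fun k => ?_
  rw [lintegral_tsum fun l => (m2 k l).aemeasurable]

lemma lint_ind {X : Type*} [MeasurableSpace X] {μ : Measure X} [SFinite μ]
    (A B : Set X) (mA : MeasurableSet A) (mB : MeasurableSet B) (a b : ENNReal)
    (K : X → X → ENNReal) (mK : Measurable (Function.uncurry K)) :
    ∫⁻ x, ∫⁻ y, (a * A.indicator 1 x) * (b * B.indicator 1 y) * K x y ∂μ ∂μ =
      (a * b) * ∫⁻ x in A, ∫⁻ y in B, K x y ∂μ ∂μ := by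
  have m3 : Measurable fun x => ∫⁻ y in B, K x y ∂μ := mK.lintegral_prod_right
  rw [← lintegral_const_mul _ m3, ← lintegral_indicator mA]
  refine lintegral_congr fun x => ?_
  have m4 : Measurable (K x) := mK.of_uncurry_left
  by_cases hx : x ∈ A
  · rw [Set.indicator_of_mem hx, Set.indicator_of_mem hx, ← lintegral_const_mul _ m4, ← lintegral_indicator mB]
    refine lintegral_congr fun y => ?_
    by_cases hy : y ∈ B <;> simp [hx, hy]
  · simp [hx]

set_option maxHeartbeats 1000000 in
lemma double_bound (N : ℕ) (s σ q : ℝ) (hq : 0 < q)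
    (u : EuclideanSpace ℝ (Fin N) → ℝ) (hu : Continuous u) :
    (∫⁻ x, ∫⁻ y, ENNReal.ofReal (|u x| ^ q * |u y| ^ q / (‖x‖ ^ s * ‖x - y‖ ^ σ))) ≤
      ∑' k : ℤ, ∑' l : ℤ, (ENNReal.ofReal (2 * √(2 ^ k)) ^ q * ENNReal.ofReal (2 * √(2 ^ l)) ^ q) *
        ∫⁻ x in {x | 2 * 2 ^ k ≤ u x ^ 2}, ∫⁻ y in {x | 2 * 2 ^ l ≤ u x ^ 2},
          ENNReal.ofReal (‖x‖ ^ (-s)) * ENNReal.ofReal (‖x - y‖ ^ (-σ)) := by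
  have mE : ∀ k : ℤ, MeasurableSet {x | 2 * 2 ^ k ≤ u x ^ 2} := fun k =>
    (isClosed_le (by fun_prop) (by fun_prop)).measurableSet
  set E : ℤ → Set (EuclideanSpace ℝ (Fin N)) := fun k => {x | 2 * 2 ^ k ≤ u x ^ 2} with hE
  set c : ℤ → ENNReal := fun k => ENNReal.ofReal (2 * √(2 ^ k)) ^ q with hc
  set K : EuclideanSpace ℝ (Fin N) → EuclideanSpace ℝ (Fin N) → ENNReal := fun x y =>
    ENNReal.ofReal (‖x‖ ^ (-s)) * ENNReal.ofReal (‖x - y‖ ^ (-σ)) with hK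
  have mK : Measurable (Function.uncurry K) := by
    simp only [hK, Function.uncurry_def]; fun_prop
  have mi : ∀ k, Measurable ((E k).indicator (1 : EuclideanSpace ℝ (Fin N) → ENNReal)) :=
    fun k => measurable_one.indicator (mE k)
  have hpt : ∀ x, ENNReal.ofReal (|u x| ^ q) ≤ ∑' k, c k * (E k).indicator 1 x := by
    intro x
    refine (rpow_le_levels (u x) q hq).trans (le_of_eq ?_)
    refine tsum_congr fun k => ?_
    simp [hc, hE, Set.indicator]
  have mF : ∀ k l, Measurable (Function.uncurry fun x y => (c k * (E k).indicator 1 x) *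
      (c l * (E l).indicator 1 y) * K x y) := by
    intro k l
    refine Measurable.mul (Measurable.mul ?_ ?_) mK
    · exact ((mi k).comp measurable_fst).const_mul _
    · exact ((mi l).comp measurable_snd).const_mul _
  calc _ ≤ ∫⁻ x, ∫⁻ y, ∑' k, ∑' l, (c k * (E k).indicator 1 x) *
        (c l * (E l).indicator 1 y) * K x y := by
        refine lintegral_mono fun x => lintegral_mono fun y => ?_
        have e : |u x| ^ q * |u y| ^ q / (‖x‖ ^ s * ‖x - y‖ ^ σ) =
          |u x| ^ q * |u y| ^ q * (‖x‖ ^ (-s) * ‖x - y‖ ^ (-σ)) := by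
          rw [Real.rpow_neg (norm_nonneg _), Real.rpow_neg (norm_nonneg _), div_eq_mul_inv, mul_inv]
        simp only []
        rw [e, ENNReal.ofReal_mul (by positivity), ENNReal.ofReal_mul (by positivity),
          ENNReal.ofReal_mul (by positivity)]
        simp only [ENNReal.tsum_mul_right, ENNReal.tsum_mul_left]
        gcongr
        · exact hpt x
        · exact hpt y
    _ = ∑' k, ∑' l, ∫⁻ x, ∫⁻ y, (c k * (E k).indicator 1 x) *
        (c l * (E l).indicator 1 y) * K x y := by
        exact lint_tsum2 (fun k l x y => (c k * (E k).indicator 1 x) *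
          (c l * (E l).indicator 1 y) * K x y) mF
    _ = _ := by
        refine tsum_congr fun k => tsum_congr fun l => ?_
        exact lint_ind (E k) (E l) (mE k) (mE l) (c k) (c l) K mK

lemma main_bound (N : ℕ) (hN : 1 ≤ N) (p s σ q : ℝ) (hp1 : 1 < p) (hpN : p < (N : ℝ))
    (hs0 : 0 ≤ s) (hsσ : s < σ) (hσN : σ < (N : ℝ)) (hpq : p ≤ q)
    (hqe : (1 / p - 1 / N) * q = 1 - (σ + s) / (2 * N)) :
    ∃ C : ENNReal, C ≠ ⊤ ∧ ∀ u : EuclideanSpace ℝ (Fin N) → ℝ,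
      ContDiff ℝ (⊤ : ℕ∞) u → HasCompactSupport u →
      (∫⁻ x, ∫⁻ y, ENNReal.ofReal (|u x| ^ q * |u y| ^ q / (‖x‖ ^ s * ‖x - y‖ ^ σ))) ^
          (1 / (2 * q)) ≤ C * (∫⁻ x, ‖fderiv ℝ u x‖ₑ ^ p) ^ (1 / p) := by
  have hp0 : 0 < p := by linarith
  have hq : 0 < q := by linarith
  obtain ⟨C, hC, hK⟩ := ker_pot' N hN s σ hs0 hsσ hσN
  obtain ⟨S, hS⟩ := level_sob N hN p hp1 hpN
  refine ⟨ENNReal.ofReal C ^ (1 / (2 * q)) * (2 * S), ?_, fun u hu hc => ?_⟩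
  · refine ENNReal.mul_ne_top (ENNReal.rpow_ne_top_of_nonneg (by positivity) ENNReal.ofReal_ne_top)
      (ENNReal.mul_ne_top (by simp) (by simp))
  have hcu : Continuous u := hu.continuous
  set e := 1 - (σ + s) / (2 * N) with he
  set E : ℤ → Set (EuclideanSpace ℝ (Fin N)) := fun k => {x | 2 * 2 ^ k ≤ u x ^ 2} with hE
  set c : ℤ → ENNReal := fun k => ENNReal.ofReal (2 * √(2 ^ k)) ^ q with hcdef
  set A : ℤ → Set (EuclideanSpace ℝ (Fin N)) := 
    fun k => {x | (2:ℝ) ^ k < u x ^ 2 ∧ u x ^ 2 < 2 * 2 ^ k} with hA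
  set g : EuclideanSpace ℝ (Fin N) → ENNReal := fun x => ‖fderiv ℝ u x‖ₑ ^ p with hg
  set G := ∫⁻ x, g x with hG
  have mE : ∀ k : ℤ, MeasurableSet (E k) := fun k =>
    (isClosed_le (by fun_prop) (by fun_prop)).measurableSet
  have mA : ∀ k : ℤ, MeasurableSet (A k) := fun k => by
    have h1 : IsOpen {x | (2:ℝ) ^ k < u x ^ 2} := isOpen_lt (by fun_prop) (by fun_prop)
    have h2 : IsOpen {x | u x ^ 2 < 2 * (2:ℝ) ^ k} := isOpen_lt (by fun_prop) (by fun_prop)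
    exact (h1.inter h2).measurableSet
  have fE : ∀ k, volume (E k) ≠ ⊤ := by
    intro k
    refine ne_top_of_le_ne_top hc.isCompact.measure_lt_top.ne (measure_mono ?_)
    intro x hx
    apply subset_tsupport
    intro h0
    have hx' : 2 * (2:ℝ) ^ k ≤ u x ^ 2 := hx
    rw [h0] at hx'
    have : (0:ℝ) < 2 ^ k := by positivity
    norm_num at hx'
    linarith
  have dA : Pairwise (Function.onFun Disjoint A) := by
    have key : ∀ k l : ℤ, k < l → Disjoint (A k) (A l) := by
      intro k l hkl
      rw [Set.disjoint_left]
      intro x hx hy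
      have h1 : (2:ℝ) ^ (k + 1) ≤ 2 ^ l := zpow_le_zpow_right₀ one_le_two (by omega)
      rw [zpow_add_one₀ two_ne_zero] at h1
      linarith [hx.2, hy.1]
    intro k l hkl
    rcases lt_or_gt_of_ne hkl with h | h
    · exact key k l h
    · exact (key l k h).symm
  have sumA : ∑' k, ∫⁻ x in A k, g x ≤ G := by
    rw [← lintegral_iUnion mA dA]
    exact setLIntegral_le_lintegral _ _
  have term : ∀ k, c k * volume (E k) ^ e ≤ (2 * S) ^ q * ((∫⁻ x in A k, g x) * G ^ (q / p - 1)) := by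
    intro k
    have h1 := hS u hu hc (2 ^ k) (by positivity)
    have hqp : 0 ≤ q / p - 1 := by rw [sub_nonneg, one_le_div hp0]; exact hpq
    calc c k * volume (E k) ^ e
        = (2 * (ENNReal.ofReal (√(2 ^ k)) * volume (E k) ^ (1 / p - 1 / N))) ^ q := by
          rw [← hqe, ENNReal.rpow_mul, ← ENNReal.mul_rpow_of_nonneg _ _ hq.le,
            ENNReal.ofReal_mul zero_le_two, ← mul_assoc]
          simp
      _ ≤ (2 * (S * (∫⁻ x in A k, g x) ^ (1 / p))) ^ q := by gcongr
      _ = (2 * S) ^ q * (∫⁻ x in A k, g x) ^ (q / p) := by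
          rw [← mul_assoc, ENNReal.mul_rpow_of_nonneg _ _ hq.le, ← ENNReal.rpow_mul]
          congr 2; ring
      _ = (2 * S) ^ q * ((∫⁻ x in A k, g x) * (∫⁻ x in A k, g x) ^ (q / p - 1)) := by
          congr 1
          nth_rewrite 2 [← ENNReal.rpow_one (∫⁻ x in A k, g x)]
          rw [← ENNReal.rpow_add_of_nonneg _ _ zero_le_one hqp]; congr 1; ring
      _ ≤ _ := by
          gcongr
          exact setLIntegral_le_lintegral _ _
  have total : ∑' k, c k * volume (E k) ^ e ≤ ((2 * S) * G ^ (1 / p)) ^ q := by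
    calc _ ≤ ∑' k, (2 * S : ENNReal) ^ q * ((∫⁻ x in A k, g x) * G ^ (q / p - 1)) := 
          ENNReal.tsum_le_tsum term
      _ = (2 * S) ^ q * ((∑' k, ∫⁻ x in A k, g x) * G ^ (q / p - 1)) := by
          rw [ENNReal.tsum_mul_left, ENNReal.tsum_mul_right]
      _ ≤ (2 * S) ^ q * (G * G ^ (q / p - 1)) := by gcongr
      _ = (2 * S) ^ q * G ^ (q / p) := by
          congr 1
          nth_rewrite 1 [← ENNReal.rpow_one G]
          rw [← ENNReal.rpow_add_of_nonneg _ _ zero_le_one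
            (by rw [sub_nonneg, one_le_div hp0]; exact hpq)]; congr 1; ring
      _ = _ := by
          rw [ENNReal.mul_rpow_of_nonneg (2 * (S : ENNReal)) _ hq.le, ← ENNReal.rpow_mul]
          congr 2; ring
  have D : (∫⁻ x, ∫⁻ y, ENNReal.ofReal (|u x| ^ q * |u y| ^ q / (‖x‖ ^ s * ‖x - y‖ ^ σ))) ≤
      ENNReal.ofReal C * ((2 * S) * G ^ (1 / p)) ^ (2 * q) := by
    calc _ ≤ _ := double_bound N s σ q hq u hcu
      _ ≤ ∑' k : ℤ, ∑' l : ℤ, ENNReal.ofReal C * ((c k * volume (E k) ^ e) * 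
            (c l * volume (E l) ^ e)) := by
          refine ENNReal.tsum_le_tsum fun k => ENNReal.tsum_le_tsum fun l => ?_
          refine (mul_le_mul_right (hK (E k) (E l) (fE k) (fE l) (mE k) (mE l)) _).trans
            (le_of_eq ?_)
          simp only [hcdef]
          ring
      _ = ENNReal.ofReal C * ((∑' k, c k * volume (E k) ^ e) * (∑' k, c k * volume (E k) ^ e)) := by
          simp only [ENNReal.tsum_mul_left, ENNReal.tsum_mul_right]
      _ ≤ ENNReal.ofReal C * (((2 * S) * G ^ (1 / p)) ^ q * ((2 * S) * G ^ (1 / p)) ^ q) := by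
          gcongr
      _ = _ := by rw [← ENNReal.rpow_add_of_nonneg _ _ hq.le hq.le, two_mul q]
  calc _ ≤ (ENNReal.ofReal C * ((2 * S) * G ^ (1 / p)) ^ (2 * q)) ^ (1 / (2 * q)) := by gcongr
    _ = _ := by
      rw [ENNReal.mul_rpow_of_nonneg _ _ (by positivity), ← ENNReal.rpow_mul,
        mul_one_div_cancel (by positivity), ENNReal.rpow_one]
      ring

/-- Inequality (1.16): the doubly weighted Hardy–Littlewood–Sobolev/Sobolev embedding
`(∬ |u(x)|^{p_{s,σ}}|u(y)|^{p_{s,σ}} / (|x|^s |x-y|^σ))^{1/(2p_{s,σ})}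
  ≤ C (∫ |∇u|^p)^{1/p}` for smooth compactly supported `u`. -/
theorem stmt_16 (N : ℕ) (hN : 2 ≤ N) (p s σ : ℝ) (hp1 : 1 < p) (hpN : p < (N : ℝ))
    (hs0 : 0 ≤ s) (hsp : s < p) (hsσ : s < σ) (hσN : σ < (N : ℝ))
    (hss0 : 0 < σ + s) (hss : σ + s ≤ 2 * p) :
    ∃ C : ℝ, 0 < C ∧ ∀ u : EuclideanSpace ℝ (Fin N) → ℝ,
      ContDiff ℝ (⊤ : ℕ∞) u → HasCompactSupport u →
      (∫⁻ x, ∫⁻ y, ENNReal.ofReal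
            (|u x| ^ pcrit N p s σ * |u y| ^ pcrit N p s σ / (‖x‖ ^ s * ‖x - y‖ ^ σ))) ^
          (1 / (2 * pcrit N p s σ)) ≤
        ENNReal.ofReal (C * (∫ x, ‖fderiv ℝ u x‖ ^ p) ^ (1 / p)) := by
  have hN1 : 1 ≤ N := by omega
  have hN0 : (0:ℝ) < N := by exact_mod_cast hN1
  have hp0 : 0 < p := by linarith
  have hNp : 0 < (N:ℝ) - p := by linarith
  obtain ⟨C, hC, h⟩ := main_bound N hN1 p s σ (pcrit N p s σ) hp1 hpN hs0 hsσ hσN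
    (by rw [pcrit, le_div_iff₀ (by positivity)]; nlinarith)
    (by rw [pcrit]; field_simp; ring)
  refine ⟨C.toReal + 1, by positivity, fun u hu hc => ?_⟩
  have hi : Integrable (fun x => ‖fderiv ℝ u x‖ ^ p) := by
    apply Continuous.integrable_of_hasCompactSupport
    · have := (hu.continuous_fderiv (by simp)).norm
      exact this.rpow_const fun x => Or.inr hp0.le
    · exact (hc.fderiv ℝ).comp_left (g := fun L => ‖L‖ ^ p) (by simp [Real.zero_rpow hp0.ne'])
  have hG : ∫⁻ x, ‖fderiv ℝ u x‖ₑ ^ p = ENNReal.ofReal (∫ x, ‖fderiv ℝ u x‖ ^ p) := by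
    rw [ofReal_integral_eq_lintegral_ofReal hi (Filter.Eventually.of_forall fun x => by positivity)]
    refine lintegral_congr fun x => ?_
    rw [← ofReal_norm, ENNReal.ofReal_rpow_of_nonneg (norm_nonneg _) hp0.le]
  have hnn : 0 ≤ ∫ x, ‖fderiv ℝ u x‖ ^ p := integral_nonneg fun x => by positivity
  refine (h u hu hc).trans ?_
  rw [hG, ENNReal.ofReal_rpow_of_nonneg hnn (by positivity), ENNReal.ofReal_mul (by positivity)]
  gcongr
  rw [ENNReal.le_ofReal_iff_toReal_le hC (by positivity)]
  linarith
end
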